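/- Let W be a finitely generated Coxeter group and let S and S' be two sets of Coxeter generators of W. Then the subgroup N_e defined with respect to (W,S) equals the subgroup N_e defined with respect to (W,S'). Consequently N_e is a characteristic subgroup of W: every automorphism of W maps N_e onto N_e. -/

import Mathlib

/-!
The proof uses the geometric representation of `W` on `B →₀ ℝ`: every root is nonnegative or
nonpositive, and parabolic subgroups are stabilizers of functionals. It follows that parabolic
subgroups are closed under intersection, that the intersection of a parabolic subgroup with a
conjugate of another one is conjugate to a parabolic subgroup (`par_inter_conj`), and that every
finite subgroup is conjugate into a finite parabolic one (`finite_le_conj_par`). Hence the maximal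
finite parabolic subgroups of `(W, S)` and of `(W, S')` are, up to conjugation, the same subgroups
of `W`, namely the maximal finite ones (`transfer`).

Let `ρ` be a generator `s t` (with `m s t` odd) or `(a b)²` (with `a, b` special) of the group `N_e`
of `(W, S)`. After a conjugation `ρ` lies in a finite subgroup `P` which is parabolic for both
systems, with generators `T ⊆ S` and `T' ⊆ S'`. Call a pair of elements of `T'` bad if it generates a
direct factor of `P` that is dihedral of order `2 n` with `n ≥ 4` even, and if the pair is not
special. The key fact is that the projection of `ρ` to such a factor is trivial (`Factor.kill_odd`,
`Factor.kill_special`). The images of `T` in the dihedral factor contain reflections of both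
conjugacy classes: for `4 ∣ n` this holds because the dihedral group has a character
trivial on all involutive rotations and on one class of reflections; for `n ≡ 2 mod 4` because the
pair is not special, so that for each of the two classes another maximal finite parabolic subgroup
meets `P` in a subgroup whose projection is generated by one reflection of that class
(`Factor.exists_wall`). If `ρ` had nontrivial image, these reflections would force in `T` a
configuration of labels excluded in finite Coxeter groups (`no_triangle`, `no_three_six`), or, for
`ρ = (a b)²`, would contradict that `ρ` lies in every maximal finite subgroup containing `a`
(`special_mem`, for the vertex `a` of the special pair).

So `ρ` lies in the parabolic subgroup generated by the elements of `T'` outside all bad pairs. Modulo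
the group `N_e` of `(W, S')` these elements commute with each other, so `ρ²` belongs to `N_e`; as `ρ`
has odd order, so does `ρ` (`mem_neIdx_of_killed`). By symmetry the two groups agree, and invariance
under an automorphism `φ` is the case `S' = φ(S)`.
-/


variable {W : Type*} [Group W]

/-- `S` is a set of Coxeter generators of the group `W`, with Coxeter matrix given by the
restriction of `m` to `S × S` (the value `0` of `m` encodes `∞`). -/
def IsCoxeterSystemOn (m : W → W → ℕ) (S : Set W) : Prop :=
  ∃ (cm : CoxeterMatrix S) (cs : CoxeterSystem cm W),
    (∀ s : S, cs.simple s = (s : W)) ∧ ∀ s t : S, cm.M s t = m s t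

/-- The subset `B` is irreducible: its Coxeter diagram (edges between distinct `x, y` with
`m x y > 2`, including `m x y = ∞`, i.e. `m x y = 0`) is nonempty and connected. -/
def IsIrreducibleOn (m : W → W → ℕ) (B : Set W) : Prop :=
  B.Nonempty ∧ ∀ u ∈ B, ∀ v ∈ B,
    Relation.ReflTransGen
      (fun x y => x ∈ B ∧ y ∈ B ∧ x ≠ y ∧ (m x y = 0 ∨ 2 < m x y)) u v

/-- `B` is a base of the Coxeter system `(W, S)`: the visual subgroup `⟨B⟩` is a noncyclic,
maximal, finite, irreducible visual subgroup. -/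
def IsBase (m : W → W → ℕ) (S B : Set W) : Prop :=
  B ⊆ S ∧ IsIrreducibleOn m B ∧ (Subgroup.closure B : Set W).Finite ∧
    ¬ IsCyclic ↥(Subgroup.closure B) ∧
    ∀ B' : Set W, B' ⊆ S → B ⊆ B' → IsIrreducibleOn m B' →
      (Subgroup.closure B' : Set W).Finite → B' = B

/-- The base `B` matches the base `B'`: the commutator subgroups of the visual subgroups
`⟨B⟩` and `⟨B'⟩` are conjugate in `W`. -/
def Matches (B B' : Set W) : Prop :=
  ∃ w : W,
    Subgroup.map ((MulAut.conj w).toMonoidHom)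
        (⁅Subgroup.closure B, Subgroup.closure B⁆ : Subgroup W)
      = ⁅Subgroup.closure B', Subgroup.closure B'⁆

/-- `(⟨B⟩, B)` has the isomorphism type of the Coxeter system of the Coxeter matrix `std`. -/
def HasType (m : W → W → ℕ) (B : Set W) {n : ℕ} (std : Fin n → Fin n → ℕ) : Prop :=
  ∃ e : ↥B ≃ Fin n, ∀ u v : ↥B, m u v = std (e u) (e v)

/-- The Coxeter matrix of type `Aₙ` (Coxeter's notation): linear diagram, all labels 3. -/
def aMat (n : ℕ) : Fin n → Fin n → ℕ := fun i j =>
  if i = j then 1 else if i.val + 1 = j.val ∨ j.val + 1 = i.val then 3 else 2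

/-- The Coxeter matrix of type `Cₙ` in Coxeter's notation (Bourbaki's `Bₙ`):
linear diagram with labels 3, …, 3, 4. -/
def cMat (n : ℕ) : Fin n → Fin n → ℕ := fun i j =>
  if i = j then 1
  else if i.val + 1 = j.val ∨ j.val + 1 = i.val then
    (if i.val + 1 = n ∨ j.val + 1 = n then 4 else 3)
  else 2

/-- The Coxeter matrix of type `Bₙ` in Coxeter's notation (Bourbaki's `Dₙ`), for `n ≥ 3`:
a chain `0, …, n-2` with labels 3 together with the edge `{n-3, n-1}` labelled 3. -/
def bMat (n : ℕ) : Fin n → Fin n → ℕ := fun i j =>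
  if i = j then 1
  else if ((i.val + 1 = j.val ∧ j.val + 2 ≤ n) ∨ (j.val + 1 = i.val ∧ i.val + 2 ≤ n))
      ∨ (i.val + 3 = n ∧ j.val + 1 = n) ∨ (j.val + 3 = n ∧ i.val + 1 = n) then 3
  else 2

/-- The dihedral Coxeter matrix `D₂(k)` (i.e. `I₂(k)`). -/
def d2Mat (k : ℕ) : Fin 2 → Fin 2 → ℕ := fun i j => if i = j then 1 else k

/-- The Coxeter matrix of type `G₃` in Coxeter's notation (i.e. `H₃`). -/
def g3Mat : Fin 3 → Fin 3 → ℕ := ![![1,3,2], ![3,1,5], ![2,5,1]]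

/-- The Coxeter matrix of type `G₄` in Coxeter's notation (i.e. `H₄`). -/
def g4Mat : Fin 4 → Fin 4 → ℕ := ![![1,3,2,2], ![3,1,3,2], ![2,3,1,5], ![2,2,5,1]]

/-- The Coxeter matrix of type `F₄`. -/
def f4Mat : Fin 4 → Fin 4 → ℕ := ![![1,3,2,2], ![3,1,4,2], ![2,4,1,3], ![2,2,3,1]]

/-- The 2-part of `k`: the largest power of 2 dividing `k` (with `0` encoding `∞`;
the 2-part of `∞` is `∞`). -/
def twoPart (k : ℕ) : ℕ := if k = 0 then 0 else 2 ^ (k.factorization 2)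

/-- The subgroup `N_b`: the normal closure in `W` of the elements `(st) ^ b(s,t)` for
`s, t ∈ S` with `m s t < ∞`, where `b(s,t)` is the 2-part of `m s t`. -/
def NbSubgroup (m : W → W → ℕ) (S : Set W) : Subgroup W :=
  Subgroup.normalClosure
    {x | ∃ s ∈ S, ∃ t ∈ S, m s t ≠ 0 ∧ x = (s * t) ^ twoPart (m s t)}

instance (m : W → W → ℕ) (S : Set W) : (NbSubgroup m S).Normal :=
  Subgroup.normalClosure_normal

/-- `(a, b)` is a special pair of elements of `S`: `m a b ≡ 2 mod 4` and either `v = a` or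
`v = b` has the property that `m s a = m s b = 2` for every `s ∈ S \ {a, b}` with
`m s v < ∞`. -/
def IsSpecialPair (m : W → W → ℕ) (S : Set W) (a b : W) : Prop :=
  a ∈ S ∧ b ∈ S ∧ a ≠ b ∧ m a b % 4 = 2 ∧
    ((∀ s ∈ S, s ≠ a → s ≠ b → m s a ≠ 0 → m s a = 2 ∧ m s b = 2) ∨
     (∀ s ∈ S, s ≠ a → s ≠ b → m s b ≠ 0 → m s a = 2 ∧ m s b = 2))

open scoped Classical in
/-- `m̄ a b = 2` if `(a, b)` is a special pair and `m̄ a b = m a b` otherwise. -/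
noncomputable def mbar (m : W → W → ℕ) (S : Set W) (a b : W) : ℕ :=
  if IsSpecialPair m S a b then 2 else m a b

/-- The subgroup `N_e`: the normal closure in `W` of the elements `st` with `m s t` odd
together with the elements `(ab)²` with `(a, b)` a special pair. -/
def NeSubgroup (m : W → W → ℕ) (S : Set W) : Subgroup W :=
  Subgroup.normalClosure
    ({x | ∃ s ∈ S, ∃ t ∈ S, Odd (m s t) ∧ x = s * t} ∪
     {x | ∃ a b : W, IsSpecialPair m S a b ∧ x = (a * b) ^ 2})

instance (m : W → W → ℕ) (S : Set W) : (NeSubgroup m S).Normal :=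
  Subgroup.normalClosure_normal

/-- The word length of `w` with respect to the generating set `B`. -/
noncomputable def wordLength (B : Set W) (w : W) : ℕ :=
  sInf {n | ∃ l : List W, (∀ x ∈ l, x ∈ B) ∧ l.length = n ∧ l.prod = w}

/-- `z` is a longest element of the visual subgroup `⟨B⟩`. -/
def IsLongestElement (B : Set W) (z : W) : Prop :=
  z ∈ Subgroup.closure B ∧
    ∀ w ∈ Subgroup.closure B, wordLength B w ≤ wordLength B z

/-- The basic subgroup `⟨B⟩` of `(W, S)` is reduced: for every set of Coxeter generators `S'`
of `W`, any base of `(W, S')` matching `B` generates a subgroup of order at least `|⟨B⟩|`. -/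
def IsReducedBase (m : W → W → ℕ) (S B : Set W) : Prop :=
  ∀ (S' : Set W) (m' : W → W → ℕ) (B' : Set W),
    IsCoxeterSystemOn m' S' → S'.Finite → IsBase m' S' B' → Matches B B' →
      Nat.card ↥(Subgroup.closure B) ≤ Nat.card ↥(Subgroup.closure B')

/-- The isomorphism type of `(⟨B⟩, B)` belongs to the family `F` of isomorphism types of
Coxeter systems (a family of Coxeter matrices). -/
def TypeIn (F : ∀ n : ℕ, (Fin n → Fin n → ℕ) → Prop) (m : W → W → ℕ) (B : Set W) : Prop :=
  ∃ (n : ℕ) (Mt : Fin n → Fin n → ℕ), F n Mt ∧ HasType m B Mt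

/-- The subgroup `N(F)`: the normal closure in `W` of the commutator subgroups of all
reduced basic subgroups of `(W, S)` of type in `F` together with the commutator subgroups of
all unreduced basic subgroups of `(W, S)` matching a reduced basic subgroup of type in `F`
of another system `(W, S')`. -/
def NFSubgroup (F : ∀ n : ℕ, (Fin n → Fin n → ℕ) → Prop)
    (m : W → W → ℕ) (S : Set W) : Subgroup W :=
  Subgroup.normalClosure
    {x | ∃ B : Set W, IsBase m S B ∧
      x ∈ (⁅Subgroup.closure B, Subgroup.closure B⁆ : Subgroup W) ∧
      ((IsReducedBase m S B ∧ TypeIn F m B) ∨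
       (¬ IsReducedBase m S B ∧ ∃ (S' : Set W) (m' : W → W → ℕ) (B' : Set W),
          IsCoxeterSystemOn m' S' ∧ S'.Finite ∧ IsBase m' S' B' ∧
          IsReducedBase m' S' B' ∧ TypeIn F m' B' ∧ Matches B B'))}

instance (F : ∀ n : ℕ, (Fin n → Fin n → ℕ) → Prop) (m : W → W → ℕ) (S : Set W) :
    (NFSubgroup F m S).Normal :=
  Subgroup.normalClosure_normal

/-- The normal closure, within the subgroup `H`, of the subset `X ⊆ H`,
as a subgroup of the ambient group. -/
def nClosIn (H : Subgroup W) (X : Set W) : Subgroup W :=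
  Subgroup.map H.subtype (Subgroup.normalClosure ((fun x : H => (x : W)) ⁻¹' X))

/-- The generating set for the subgroup `N(⟨B⟩)` of a basic subgroup `⟨B⟩` of rank at least 3:
the commutator subgroup of `⟨B⟩` if the rank is at least 5 or the type is `A₄`, `G₃` or `G₄`;
`a₁a₃` for type `A₃`; `b₁b₂, b₂b₃` (products of distinct commuting generators) for type `B₄`;
`(c₂c₃)²` for type `C₃`; `c₁c₃` for type `C₄`; and `(f₂f₃)²` for type `F₄`. -/
def genSetNB (m : W → W → ℕ) (B : Set W) : Set W :=
  {x | ((5 ≤ B.ncard ∨ HasType m B (aMat 4) ∨ HasType m B g3Mat ∨ HasType m B g4Mat) ∧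
          x ∈ (⁅Subgroup.closure B, Subgroup.closure B⁆ : Subgroup W)) ∨
       (HasType m B (aMat 3) ∧ ∃ u ∈ B, ∃ v ∈ B, u ≠ v ∧ m u v = 2 ∧ x = u * v) ∨
       (HasType m B (bMat 4) ∧ ∃ u ∈ B, ∃ v ∈ B, u ≠ v ∧ m u v = 2 ∧ x = u * v) ∨
       (HasType m B (cMat 3) ∧ ∃ u ∈ B, ∃ v ∈ B, m u v = 4 ∧ x = (u * v) ^ 2) ∨
       (HasType m B (cMat 4) ∧ ∃ u ∈ B, ∃ p ∈ B, ∃ v ∈ B, ∃ q ∈ B,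
          m u p = 3 ∧ m p v = 3 ∧ m v q = 4 ∧ m u v = 2 ∧ x = u * v) ∨
       (HasType m B f4Mat ∧ ∃ u ∈ B, ∃ v ∈ B, m u v = 4 ∧ x = (u * v) ^ 2)}

/-- The subgroup `N(⟨B⟩)` of the visual subgroup `⟨B⟩`, viewed as a subgroup of `W`. -/
def NBSubgroup (m : W → W → ℕ) (B : Set W) : Subgroup W :=
  nClosIn (Subgroup.closure B) (genSetNB m B)

/-- The subgroup `N(W)`: the normal closure in `W` of the subgroups `N(⟨B⟩)` over all
bases `B` of `(W, S)` of rank greater than 2. -/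
def NWSubgroup (m : W → W → ℕ) (S : Set W) : Subgroup W :=
  Subgroup.normalClosure
    {x | ∃ B : Set W, IsBase m S B ∧ 2 < B.ncard ∧ x ∈ NBSubgroup m B}

instance (m : W → W → ℕ) (S : Set W) : (NWSubgroup m S).Normal :=
  Subgroup.normalClosure_normal

namespace CoxGeo
open Real CoxeterSystem

/-! ### The geometric representation -/

section Rep

variable {B : Type*} (M : CoxeterMatrix B)

/-- The simple root `α_i`, a basis vector of `B →₀ ℝ`. -/
noncomputable abbrev α (i : B) : B →₀ ℝ := Finsupp.single i 1

/-- The simple coroot: `coroot i (α j) = -2 cos (π / m i j)`. Since `π / 0 = 0` in Lean, the value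
is `-2` when `m i j = ∞`, as it should be. -/
noncomputable def coroot (i : B) : (B →₀ ℝ) →ₗ[ℝ] ℝ :=
  Finsupp.linearCombination ℝ (fun j => -(2 * cos (π / M i j)))

lemma coroot_α (i j : B) : coroot M i (α j) = -(2 * cos (π / M i j)) := by
  simp [coroot]

lemma coroot_self (i : B) : coroot M i (α i) = 2 := by
  simp [coroot_α]

lemma coroot_symm (i j : B) : coroot M i (α j) = coroot M j (α i) := by
  rw [coroot_α, coroot_α, M.symmetric]

/-- The reflection `v ↦ v - coroot i v • α i`. -/
noncomputable def refl (i : B) : (B →₀ ℝ) ≃ₗ[ℝ] (B →₀ ℝ) :=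
  Module.reflection (coroot_self M i)

lemma refl_apply (i : B) (v : B →₀ ℝ) : refl M i v = v - coroot M i v • α i := by
  rw [refl, Module.reflection_apply]

lemma refl_sq (i : B) : refl M i * refl M i = 1 := by
  ext1 v
  exact Module.involutive_reflection (coroot_self M i) v

/-- The product of two simple reflections has the order required by the Coxeter matrix. For
`m ≥ 3` this is read off from the Chebyshev formula for powers of a product of two reflections. -/
lemma refl_liftable : M.IsLiftable (refl M) := by
  intro i j
  by_cases h0 : M i j = 0
  · rw [h0, pow_zero]
  by_cases h1 : M i j = 1
  · have : i = j := by
      by_contra h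
      exact M.off_diagonal i j h h1
    subst this
    rw [h1, pow_one, refl_sq]
  have hij : i ≠ j := by
    rintro rfl
    exact h1 (M.diagonal i)
  have hc : coroot M j (α i) = -(2 * cos (π / M i j)) := by rw [coroot_symm, coroot_α]
  by_cases h2 : M i j = 2
  · have e1 : coroot M i (α j) = 0 := by rw [coroot_α, h2]; simp
    have e2 : coroot M j (α i) = 0 := by rw [coroot_symm, e1]
    rw [h2]
    ext1 v
    simp only [pow_two, LinearEquiv.mul_apply, LinearEquiv.coe_one, id, refl_apply, map_sub,
      map_smul, e1, e2, coroot_self]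
    module
  set m := M i j with hm
  have hm3 : 3 ≤ m := by omega
  have hmpos : (0 : ℝ) < m := by positivity
  set θ := π / m with hθ
  have hmθ : (m : ℝ) * θ = π := by rw [hθ]; field_simp
  have hθ0 : 0 < θ := by positivity
  have h2θ : 2 * θ < π := by
    have : (3 : ℝ) ≤ m := by exact_mod_cast hm3
    nlinarith
  have hs : sin (2 * θ) ≠ 0 := (sin_pos_of_pos_of_lt_pi (by positivity) h2θ).ne'
  have ht : 2 * cos (2 * θ) = coroot M i (α j) * coroot M j (α i) - 2 := by
    rw [hc, coroot_α, cos_two_mul]; ring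
  have hS : ∀ n : ℤ, (Polynomial.Chebyshev.S ℝ n).eval (2 * cos (2 * θ)) * sin (2 * θ)
      = sin ((n + 1) * (2 * θ)) := fun n => Polynomial.Chebyshev.S_two_mul_real_cos _ n
  ext1 v
  have key := Module.reflection_mul_reflection_pow_apply (coroot_self M i) (coroot_self M j) m v
    (2 * cos (2 * θ)) ht
  have hr : (refl M i * refl M j) ^ m = (Module.reflection (coroot_self M i) *
    Module.reflection (coroot_self M j)) ^ m := rfl
  rw [hr, key]
  rcases Nat.even_or_odd' m with ⟨n, hn | hn⟩
  · have e1 : ((m : ℤ) - 2) / 2 = n - 1 := by omega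
    have e2 : ((m : ℤ) - 1) / 2 = n - 1 := by omega
    have z : (Polynomial.Chebyshev.S ℝ ((n : ℤ) - 1)).eval (2 * cos (2 * θ)) = 0 := by
      have := hS (n - 1)
      have e : (((n : ℤ) - 1 : ℤ) + 1 : ℝ) * (2 * θ) = π := by
        rw [← hmθ, hn]; push_cast; ring
      rw [e, sin_pi] at this
      exact (mul_eq_zero.mp this).resolve_right hs
    rw [e1, e2, z]
    simp
  · have e1 : ((m : ℤ) - 2) / 2 = n - 1 := by omega
    have e2 : ((m : ℤ) - 1) / 2 = n := by omega
    have e3 : ((m : ℤ) - 3) / 2 = n - 1 := by omega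
    have e4 : (m : ℤ) / 2 = n := by omega
    have z : (Polynomial.Chebyshev.S ℝ (n : ℤ)).eval (2 * cos (2 * θ)) +
        (Polynomial.Chebyshev.S ℝ ((n : ℤ) - 1)).eval (2 * cos (2 * θ)) = 0 := by
      have h1 := hS n
      have h2 := hS (n - 1)
      have e5 : (((n : ℤ) - 1 : ℤ) + 1 : ℝ) * (2 * θ) = π - θ := by
        rw [← hmθ, hn]; push_cast; ring
      have e6 : (((n : ℤ) : ℝ) + 1) * (2 * θ) = π + θ := by
        rw [← hmθ, hn]; push_cast; ring
      rw [e5, sin_pi_sub] at h2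
      rw [e6, sin_add] at h1
      simp only [sin_pi, cos_pi] at h1
      refine (mul_eq_zero.mp (?_ : _ * sin (2 * θ) = 0)).resolve_right hs
      rw [add_mul, h1, h2]; ring
    rw [e1, e2, e3, e4, z]
    simp

/-- The invariant symmetric bilinear form, normalised by `form (α i) (α i) = 2`. -/
noncomputable def form : (B →₀ ℝ) →ₗ[ℝ] (B →₀ ℝ) →ₗ[ℝ] ℝ :=
  Finsupp.linearCombination ℝ (coroot M)

lemma form_α_left (i : B) (v : B →₀ ℝ) : form M (α i) v = coroot M i v := by
  simp [form]

lemma form_symm (v w : B →₀ ℝ) : form M v w = form M w v := by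
  have : form M = (form M).flip := by
    ext i j
    simpa [form_α_left] using coroot_symm M i j
  conv_lhs => rw [this]
  rfl

lemma form_α_right (i : B) (v : B →₀ ℝ) : form M v (α i) = coroot M i v := by
  rw [form_symm, form_α_left]

lemma form_refl (i : B) (v w : B →₀ ℝ) : form M (refl M i v) (refl M i w) = form M v w := by
  simp only [refl_apply, map_sub, map_smul, LinearMap.sub_apply, LinearMap.smul_apply,
    form_α_left, form_α_right, coroot_self, smul_eq_mul]
  ring

/-- Coefficients of the roots of a dihedral group, `qseq (2 cos θ) n = sin (n θ) / sin θ`. -/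
def qseq (c : ℝ) : ℕ → ℝ
  | 0 => 0
  | 1 => 1
  | n + 2 => c * qseq c (n + 1) - qseq c n

lemma qseq_sin (θ : ℝ) (n : ℕ) : qseq (2 * cos θ) n * sin θ = sin (n * θ) := by
  induction n using Nat.twoStepInduction with
  | zero => simp [qseq]
  | one => simp [qseq]
  | more n h1 h2 =>
    have e : qseq (2 * cos θ) (n + 2) * sin θ =
      2 * cos θ * (qseq (2 * cos θ) (n + 1) * sin θ) - qseq (2 * cos θ) n * sin θ := by
      rw [qseq]; ring
    rw [e, h1, h2]
    have a1 : ((n + 2 : ℕ) : ℝ) * θ = (n + 1 : ℕ) * θ + θ := by push_cast; ring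
    have a2 : (n : ℝ) * θ = (n + 1 : ℕ) * θ - θ := by push_cast; ring
    rw [a1, a2, sin_add, sin_sub]; ring

lemma qseq_two (n : ℕ) : qseq 2 n = n := by
  induction n using Nat.twoStepInduction with
  | zero => simp [qseq]
  | one => simp [qseq]
  | more n h1 h2 => rw [qseq, h1, h2]; push_cast; ring

lemma qseq_nonneg (m n : ℕ) (hm : m ≠ 1) (h : m = 0 ∨ n ≤ m) :
    0 ≤ qseq (2 * cos (π / m)) n := by
  by_cases h0 : m = 0
  · subst h0
    simp [qseq_two]
  have hn : n ≤ m := h.resolve_left h0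
  have hm2 : (2 : ℝ) ≤ m := by exact_mod_cast (by omega : 2 ≤ m)
  have hmθ : (m : ℝ) * (π / m) = π := by field_simp
  have hθ0 : 0 < π / m := by positivity
  have hs : 0 < sin (π / m) := sin_pos_of_pos_of_lt_pi hθ0 (by nlinarith)
  have := qseq_sin (π / m) n
  have h2 : 0 ≤ sin (n * (π / m)) := by
    apply sin_nonneg_of_nonneg_of_le_pi (by positivity)
    calc (n : ℝ) * (π / m) ≤ m * (π / m) := by gcongr
      _ = π := hmθ
  rw [← this] at h2
  exact nonneg_of_mul_nonneg_left h2 hs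

end Rep

section Pos

variable {B : Type*} {M : CoxeterMatrix B} (cs : CoxeterSystem M W)

/-- The geometric representation of a Coxeter group. -/
noncomputable def rep : W →* ((B →₀ ℝ) ≃ₗ[ℝ] (B →₀ ℝ)) := cs.lift ⟨refl M, refl_liftable M⟩

lemma rep_simple (i : B) : rep cs (cs.simple i) = refl M i := by
  simp [rep]

lemma rep_mul_apply (u w : W) (v : B →₀ ℝ) : rep cs (u * w) v = rep cs u (rep cs w v) := by
  rw [map_mul]; rfl

lemma rep_simple_apply (i : B) (v : B →₀ ℝ) :
    rep cs (cs.simple i) v = v - coroot M i v • α i := by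
  rw [rep_simple, refl_apply]

lemma rep_simple_self (i : B) : rep cs (cs.simple i) (α i) = - α i := by
  rw [rep_simple_apply, coroot_self]; module

lemma rep_inv_apply (w : W) (v : B →₀ ℝ) : rep cs w⁻¹ (rep cs w v) = v := by
  rw [← rep_mul_apply]; simp

lemma rep_apply_inv (w : W) (v : B →₀ ℝ) : rep cs w (rep cs w⁻¹ v) = v := by
  rw [← rep_mul_apply]; simp

lemma form_rep (w : W) (u v : B →₀ ℝ) : form M (rep cs w u) (rep cs w v) = form M u v := by
  induction w using cs.simple_induction_left generalizing u v with
  | one => simp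
  | mul_simple_left w i ih => rw [rep_mul_apply, rep_mul_apply, rep_simple, form_refl, ih]

lemma rep_alternatingWord (i j : B) (k : ℕ) :
    rep cs (cs.wordProd (alternatingWord i j k)) (α i) =
      if Even k then
        qseq (2 * cos (π / M i j)) (k + 1) • α i + qseq (2 * cos (π / M i j)) k • α j
      else qseq (2 * cos (π / M i j)) k • α i + qseq (2 * cos (π / M i j)) (k + 1) • α j := by
  induction k with
  | zero => simp [alternatingWord, qseq]
  | succ k ih =>
    have hji : coroot M j (α i) = -(2 * cos (π / M i j)) := by rw [coroot_symm, coroot_α]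
    rw [alternatingWord_succ', wordProd_cons, rep_mul_apply, ih]
    by_cases hk : Even k
    · have hk' : ¬ Even (k + 1) := by simpa [Nat.even_add_one] using hk
      simp only [hk, hk', if_true, if_false, rep_simple_apply, map_add, map_smul, coroot_self, hji,
        qseq]
      module
    · have hk' : Even (k + 1) := by simpa [Nat.even_add_one] using hk
      simp only [hk, hk', if_true, if_false, rep_simple_apply, map_add, map_smul, coroot_self,
        coroot_α, qseq]
      module

lemma rep_nonneg_of_nonneg {w : W} {i j : B} {a b : ℝ} (ha : 0 ≤ a) (hb : 0 ≤ b)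
    (hi : 0 ≤ rep cs w (α i)) (hj : 0 ≤ rep cs w (α j)) :
    0 ≤ rep cs w (a • α i + b • α j) := by
  rw [map_add, map_smul, map_smul]
  exact add_nonneg (smul_nonneg ha hi) (smul_nonneg hb hj)

/-- Splitting off a dihedral suffix: if `i` is not a right descent of `w ≠ 1`, then
`w = v * d` with lengths adding up, `d` in the dihedral group of `i` and some `t ≠ i`, and neither
`i` nor `t` a right descent of the shorter element `v`. -/
lemma exists_dihedral_suffix (w : W) (i : B) (hw : w ≠ 1)
    (hi : cs.length w < cs.length (w * cs.simple i)) :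
    ∃ (t : B) (v : W) (k : ℕ), t ≠ i ∧ w = v * cs.wordProd (alternatingWord i t k) ∧
      cs.length v < cs.length w ∧ (M i t = 0 ∨ k < M i t) ∧
      cs.length v < cs.length (v * cs.simple i) ∧ cs.length v < cs.length (v * cs.simple t) := by
  classical
  obtain ⟨t, ht⟩ := cs.exists_rightDescent_of_ne_one hw
  have hti : t ≠ i := by
    rintro rfl
    unfold IsRightDescent at ht
    omega
  have hti' := cs.isRightDescent_iff.mp ht
  let P : ℕ → Prop := fun k => ∃ v, w = v * cs.wordProd (alternatingWord i t k) ∧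
    cs.length v + k = cs.length w
  have hP1 : P 1 := ⟨w * cs.simple t, by simp [alternatingWord], hti'⟩
  have hb : ∀ k, P k → k ≤ cs.length w := by
    rintro k ⟨v, -, h⟩; omega
  have hk := Nat.findGreatest_spec (hb 1 hP1) hP1
  have hk1 : 1 ≤ Nat.findGreatest P (cs.length w) := Nat.le_findGreatest (hb 1 hP1) hP1
  have hmax : ∀ k, P k → k ≤ Nat.findGreatest P (cs.length w) :=
    fun k h => Nat.le_findGreatest (hb k h) h
  generalize Nat.findGreatest P (cs.length w) = k at hk hk1 hmax
  obtain ⟨v, hv, hl⟩ := hk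
  have hlen : ∀ n (a b : B), cs.length (cs.wordProd (alternatingWord a b n)) ≤ n := by
    intro n a b
    simpa using cs.length_wordProd_le (alternatingWord a b n)
  have key1 : cs.length v < cs.length (v * cs.simple (if Even k then t else i)) := by
    by_contra hcon
    have h1 := (cs.length_mul_simple v (if Even k then t else i))
    have : P (k + 1) := by
      refine ⟨v * cs.simple (if Even k then t else i), ?_, by omega⟩
      rw [alternatingWord_succ', wordProd_cons, ← mul_assoc, simple_mul_simple_cancel_right]
      exact hv
    have := hmax _ this
    omega
  have key2 : cs.length v < cs.length (v * cs.simple (if Even k then i else t)) := by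
    obtain ⟨k', rfl⟩ : ∃ k', k = k' + 1 := ⟨k - 1, by omega⟩
    have e : (if Even (k' + 1) then i else t) = (if Even k' then t else i) := by
      by_cases h : Even k' <;> simp [Nat.even_add_one, h]
    rw [e]
    by_contra hcon
    have h1 := (cs.length_mul_simple v (if Even k' then t else i))
    rw [alternatingWord_succ', wordProd_cons, ← mul_assoc] at hv
    have h2 := cs.length_mul_le (v * cs.simple (if Even k' then t else i))
      (cs.wordProd (alternatingWord i t k'))
    rw [← hv] at h2
    have := hlen k' i t
    omega
  refine ⟨t, v, k, hti, hv, by omega, ?_, ?_, ?_⟩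
  · by_contra hcon
    push Not at hcon
    obtain ⟨hM, hkM⟩ := hcon
    rcases hkM.lt_or_eq with h | h
    · have h1 := cs.not_isReduced_alternatingWord i t hM h
      have h2 := hlen k i t
      have h3 := cs.length_mul_le v (cs.wordProd (alternatingWord i t k))
      rw [← hv] at h3
      apply h1
      unfold CoxeterSystem.IsReduced
      rw [length_alternatingWord]
      omega
    · have h1 := cs.wordProd_braidWord_eq i t
      unfold braidWord at h1
      rw [h, M.symmetric t i, h] at h1
      obtain ⟨k', rfl⟩ : ∃ k', k = k' + 1 := ⟨k - 1, by omega⟩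
      have h2 : w * cs.simple i = v * cs.wordProd (alternatingWord i t k') := by
        conv_lhs => rw [hv, h1, alternatingWord_succ, wordProd_concat, mul_assoc, mul_assoc,
          simple_mul_simple_self, mul_one]
      have h3 := cs.length_mul_le v (cs.wordProd (alternatingWord i t k'))
      rw [← h2] at h3
      have := hlen k' i t
      omega
  · by_cases h : Even k
    · simpa [h] using key2
    · simpa [h] using key1
  · by_cases h : Even k
    · simpa [h] using key1
    · simpa [h] using key2

/-- The fundamental positivity theorem: `w α_i` is a positive root unless `i` is a right descent
of `w`. -/
theorem rep_nonneg (w : W) (i : B) (hi : cs.length w < cs.length (w * cs.simple i)) :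
    0 ≤ rep cs w (α i) := by
  induction hn : cs.length w using Nat.strong_induction_on generalizing w i with
  | _ n ih =>
    by_cases hw : w = 1
    · subst hw
      simp
    obtain ⟨t, v, k, hti, hv, hl, hk, h1, h2⟩ := exists_dihedral_suffix cs w i hw hi
    have p1 := ih _ (hn ▸ hl) v i h1 rfl
    have p2 := ih _ (hn ▸ hl) v t h2 rfl
    have hM1 : M i t ≠ 1 := M.off_diagonal i t hti.symm
    have q1 := qseq_nonneg (M i t) k hM1 (by omega)
    have q2 := qseq_nonneg (M i t) (k + 1) hM1 (by omega)
    rw [hv, rep_mul_apply, rep_alternatingWord]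
    split_ifs
    · exact rep_nonneg_of_nonneg cs q2 q1 p1 p2
    · exact rep_nonneg_of_nonneg cs q1 q2 p1 p2

theorem rep_nonpos (w : W) (i : B) (hi : cs.length (w * cs.simple i) < cs.length w) :
    rep cs w (α i) ≤ 0 := by
  have := rep_nonneg cs (w * cs.simple i) i (by simpa using hi)
  rw [rep_mul_apply, rep_simple_self, map_neg] at this
  exact neg_nonneg.mp this

lemma α_ne_zero (i : B) : (α i : B →₀ ℝ) ≠ 0 := by simp

lemma rep_ne_zero (w : W) {v : B →₀ ℝ} (hv : v ≠ 0) : rep cs w v ≠ 0 := by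
  simpa using hv

lemma length_lt_of_rep_nonneg {w : W} {i : B} (h : 0 ≤ rep cs w (α i)) :
    cs.length w < cs.length (w * cs.simple i) := by
  by_contra hcon
  have h1 := cs.length_mul_simple w i
  have := rep_nonpos cs w i (by omega)
  exact rep_ne_zero cs w (α_ne_zero i) (le_antisymm this h)

lemma length_lt_of_rep_nonpos {w : W} {i : B} (h : rep cs w (α i) ≤ 0) :
    cs.length (w * cs.simple i) < cs.length w := by
  by_contra hcon
  have h1 := cs.length_mul_simple w i
  have := rep_nonneg cs w i (by omega)
  exact rep_ne_zero cs w (α_ne_zero i) (le_antisymm h this)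

lemma rep_pos_or_neg (w : W) (i : B) : 0 ≤ rep cs w (α i) ∨ rep cs w (α i) ≤ 0 := by
  rcases lt_or_gt_of_ne (cs.length_mul_simple_ne w i) with h | h
  · exact Or.inr (rep_nonpos cs w i h)
  · exact Or.inl (rep_nonneg cs w i h)

lemma eq_one_of_rep_nonneg {w : W} (h : ∀ i, 0 ≤ rep cs w (α i)) : w = 1 := by
  by_contra hw
  obtain ⟨t, ht⟩ := cs.exists_rightDescent_of_ne_one hw
  have := length_lt_of_rep_nonneg cs (h t)
  unfold IsRightDescent at ht
  omega

lemma rep_injective : Function.Injective (rep cs) := by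
  rw [injective_iff_map_eq_one]
  intro w hw
  apply eq_one_of_rep_nonneg cs
  intro i
  rw [hw]
  simp

end Pos

section Geo
variable {B : Type*} {M : CoxeterMatrix B} (cs : CoxeterSystem M W)

/-! ### Positive roots and parabolic subgroups -/

/-- The standard parabolic subgroup generated by the simple reflections in `T`. -/
def par (T : Set B) : Subgroup W := Subgroup.closure (cs.simple '' T)

/-- Positive roots of the geometric representation. -/
def PosRoot (v : B →₀ ℝ) : Prop := 0 ≤ v ∧ ∃ w i, v = rep cs w (α i)

variable {cs}

lemma PosRoot.ne_zero {v : B →₀ ℝ} (h : PosRoot cs v) : v ≠ 0 := by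
  obtain ⟨-, w, i, rfl⟩ := h
  exact rep_ne_zero cs w (α_ne_zero i)

lemma PosRoot.pos_or_neg {v : B →₀ ℝ} (h : PosRoot cs v) (w : W) :
    0 ≤ rep cs w v ∨ rep cs w v ≤ 0 := by
  obtain ⟨-, u, i, rfl⟩ := h
  rw [← rep_mul_apply]
  exact rep_pos_or_neg cs _ i

lemma PosRoot.rep {v : B →₀ ℝ} (h : PosRoot cs v) {w : W} (hw : 0 ≤ CoxGeo.rep cs w v) :
    PosRoot cs (CoxGeo.rep cs w v) := by
  refine ⟨hw, ?_⟩
  obtain ⟨-, u, i, rfl⟩ := h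
  exact ⟨w * u, i, by rw [rep_mul_apply]⟩

lemma PosRoot.neg_of_not {v : B →₀ ℝ} (h : PosRoot cs v) {w : W} (hw : ¬ 0 ≤ CoxGeo.rep cs w v) :
    CoxGeo.rep cs w v ≤ 0 := (h.pos_or_neg w).resolve_left hw

lemma posRoot_α (i : B) : PosRoot cs (α i) := ⟨by simp, 1, i, by simp⟩

lemma PosRoot.form_self {v : B →₀ ℝ} (h : PosRoot cs v) : form M v v = 2 := by
  obtain ⟨-, u, i, rfl⟩ := h
  rw [form_rep, form_α_left, coroot_self]

lemma PosRoot.not_nonpos {v : B →₀ ℝ} (h : PosRoot cs v) : ¬ v ≤ 0 :=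
  fun h' => h.ne_zero (le_antisymm h' h.1)

/-- A positive root supported on a single vertex is simple. -/
lemma PosRoot.eq_α {v : B →₀ ℝ} (h : PosRoot cs v) {t : B} (ht : ∀ j, j ≠ t → v j = 0) :
    v = α t := by
  have e : v = v t • α t := by
    ext j
    by_cases hj : j = t
    · subst hj; simp
    · simp [ht j hj, Ne.symm hj]
  have h2 := h.form_self
  rw [e] at h2
  simp only [map_smul, LinearMap.smul_apply, form_α_left, coroot_self, smul_eq_mul] at h2
  have h0 : 0 ≤ v t := h.1 t
  have : v t = 1 := by nlinarith
  rw [e, this, one_smul]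

lemma rep_simple_coord (t j : B) (v : B →₀ ℝ) (hj : j ≠ t) :
    rep cs (cs.simple t) v j = v j := by
  simp [rep_simple_apply, hj.symm]

/-- A simple reflection permutes the positive roots other than its own simple root. -/
lemma PosRoot.simple {v : B →₀ ℝ} (h : PosRoot cs v) {t : B} (ht : v ≠ α t) :
    PosRoot cs (CoxGeo.rep cs (cs.simple t) v) := by
  apply h.rep
  by_contra hcon
  have hn := h.neg_of_not hcon
  apply ht
  apply h.eq_α
  intro j hj
  have h1 := hn j
  rw [rep_simple_coord t j v hj] at h1
  exact le_antisymm h1 (h.1 j)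

/-- An element makes only finitely many positive roots negative. -/
lemma inversions_finite (w : W) : {v | PosRoot cs v ∧ rep cs w v ≤ 0}.Finite := by
  induction w using cs.simple_induction_left with
  | one =>
    convert Set.finite_empty
    ext v
    simp only [map_one, Set.mem_ofPred_eq, Set.mem_empty_iff_false, iff_false, not_and]
    exact fun h => h.not_nonpos
  | mul_simple_left w i ih =>
    refine (ih.union (Set.finite_singleton (rep cs w⁻¹ (α i)))).subset ?_
    rintro v ⟨hv, hw⟩
    by_cases h : 0 ≤ rep cs w v
    · right
      by_contra hne
      refine ((hv.rep h).simple (t := i) ?_).not_nonpos (by rwa [← rep_mul_apply])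
      intro h'
      exact hne (by rw [← h', rep_inv_apply]; rfl)
    · left
      exact ⟨hv, hv.neg_of_not h⟩

/-- If `w` carries one simple root to another, it conjugates the corresponding reflections. -/
lemma conj_of_rep_eq {w : W} {s t : B} (h : rep cs w (α s) = α t) :
    w * cs.simple s * w⁻¹ = cs.simple t := by
  apply rep_injective cs
  ext1 v
  rw [rep_mul_apply, rep_mul_apply, rep_simple_apply, map_sub, map_smul, rep_apply_inv, h,
    rep_simple_apply, ← form_α_left, ← form_α_left, ← form_rep cs w, h, rep_apply_inv]

lemma simple_mem_par {T : Set B} {t : B} (ht : t ∈ T) : cs.simple t ∈ par cs T :=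
  Subgroup.subset_closure ⟨t, ht, rfl⟩

lemma par_mono {T U : Set B} (h : T ⊆ U) : par cs T ≤ par cs U :=
  Subgroup.closure_mono (Set.image_mono h)

lemma par_univ : par cs (Set.univ : Set B) = ⊤ := by
  rw [par, Set.image_univ, cs.subgroup_closure_range_simple]

lemma mem_par_iff {T : Set B} {h : W} :
    h ∈ par cs T ↔ ∃ ω : List B, (∀ i ∈ ω, i ∈ T) ∧ cs.wordProd ω = h := by
  constructor
  · intro hh
    induction hh using Subgroup.closure_induction with
    | mem x hx =>
      obtain ⟨t, ht, rfl⟩ := hx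
      exact ⟨[t], by simpa using ht, by simp⟩
    | one => exact ⟨[], by simp, by simp⟩
    | mul x y _ _ hx hy =>
      obtain ⟨ω, h1, rfl⟩ := hx
      obtain ⟨ω', h2, rfl⟩ := hy
      refine ⟨ω ++ ω', ?_, by rw [wordProd_append]⟩
      intro i hi
      rcases List.mem_append.mp hi with h | h
      · exact h1 i h
      · exact h2 i h
    | inv x _ hx =>
      obtain ⟨ω, h1, rfl⟩ := hx
      exact ⟨ω.reverse, by simpa using h1, by rw [wordProd_reverse]⟩
  · rintro ⟨ω, h1, rfl⟩
    induction ω with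
    | nil => simp
    | cons i ω ih =>
      rw [wordProd_cons]
      exact mul_mem (simple_mem_par (h1 i (by simp))) (ih fun j hj => h1 j (by simp [hj]))

/-- When a word makes a positive root negative, some letter does it, at a moment when the root has
become simple. -/
lemma exists_crossing (ω : List B) {v : B →₀ ℝ} (hv : PosRoot cs v)
    (h : rep cs (cs.wordProd ω) v ≤ 0) :
    ∃ ω₁ t ω₂, ω = ω₁ ++ t :: ω₂ ∧ rep cs (cs.wordProd ω₂) v = α t := by
  induction ω with
  | nil => exact absurd (by simpa using h) hv.not_nonpos
  | cons t ω ih =>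
    by_cases hp : 0 ≤ rep cs (cs.wordProd ω) v
    · refine ⟨[], t, ω, rfl, ?_⟩
      by_contra hne
      refine ((hv.rep hp).simple hne).not_nonpos ?_
      rwa [← rep_mul_apply, ← wordProd_cons]
    · obtain ⟨ω₁, u, ω₂, rfl, h2⟩ := ih (hv.neg_of_not hp)
      exact ⟨t :: ω₁, u, ω₂, rfl, h2⟩

/-- A nontrivial element of a parabolic subgroup has a right descent in the parabolic. -/
lemma exists_descent {T : Set B} {h : W} (hh : h ∈ par cs T) (h1 : h ≠ 1) :
    ∃ t ∈ T, rep cs h (α t) ≤ 0 := by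
  classical
  have hex : ∃ n, ∃ ω : List B, (∀ i ∈ ω, i ∈ T) ∧ cs.wordProd ω = h ∧ ω.length = n := by
    obtain ⟨ω, a, b⟩ := mem_par_iff.mp hh
    exact ⟨_, ω, a, b, rfl⟩
  obtain ⟨ω, hT, hω, hl⟩ := Nat.find_spec hex
  have hmin : ∀ ω' : List B, (∀ i ∈ ω', i ∈ T) → cs.wordProd ω' = h → ω.length ≤ ω'.length :=
    fun ω' a b => hl ▸ Nat.find_min' hex ⟨ω', a, b, rfl⟩
  rcases List.eq_nil_or_concat ω with rfl | ⟨ω', t, rfl⟩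
  · exact absurd (by simpa using hω.symm) h1
  refine ⟨t, hT t (by simp), ?_⟩
  by_contra hcon
  have hp : 0 ≤ rep cs h (α t) := by
    by_contra h'
    exact hcon ((posRoot_α t).neg_of_not h')
  have hn : rep cs (cs.wordProd ω') (α t) ≤ 0 := by
    rw [← hω, wordProd_concat, rep_mul_apply, rep_simple_self, map_neg] at hp
    exact neg_nonneg.mp hp
  obtain ⟨ω₁, u, ω₂, rfl, h2⟩ := exists_crossing ω' (posRoot_α t) hn
  have h3 := conj_of_rep_eq h2
  have := hmin (ω₁ ++ ω₂) (fun i hi => hT i (by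
    simp only [List.concat_eq_append, List.mem_append, List.mem_cons] at hi ⊢; tauto)) (by
    rw [← hω, wordProd_concat, wordProd_append, wordProd_append, wordProd_cons, ← h3]
    simp [mul_assoc])
  simp at this

/-- Induction over a parabolic subgroup along right descents. -/
lemma par_induction {T : Set B} {P : (h : W) → h ∈ par cs T → Prop} (one : P 1 (one_mem _))
    (step : ∀ h hh, ∀ t, ∀ ht : t ∈ T, 0 ≤ rep cs h (α t) → P h hh →
      P (h * cs.simple t) (mul_mem hh (simple_mem_par ht)))
    {h : W} (hh : h ∈ par cs T) : P h hh := by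
  induction hn : cs.length h using Nat.strong_induction_on generalizing h with
  | _ n ih =>
    by_cases h1 : h = 1
    · subst h1
      exact one
    obtain ⟨t, ht, hd⟩ := exists_descent hh h1
    have hm := mul_mem hh (simple_mem_par (cs := cs) ht)
    have hs := step _ hm t ht
      (by rw [rep_mul_apply, rep_simple_self, map_neg]; exact neg_nonneg.mpr hd)
      (ih _ (hn ▸ length_lt_of_rep_nonpos cs hd) hm rfl)
    simpa using hs

lemma rep_par_coord {T : Set B} {h : W} (hh : h ∈ par cs T) {j : B} (hj : j ∉ T) (v : B →₀ ℝ) :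
    rep cs h v j = v j := by
  induction hh using par_induction generalizing v with
  | one => simp
  | step h _ t ht _ ih =>
    rw [rep_mul_apply, ih, rep_simple_coord t j v (by rintro rfl; exact hj ht)]

/-! ### The dual action and stabilizers of functionals -/

variable (cs) in
/-- The contragredient action on linear functionals. -/
noncomputable def act (w : W) (F : (B →₀ ℝ) →ₗ[ℝ] ℝ) : (B →₀ ℝ) →ₗ[ℝ] ℝ :=
  F ∘ₗ (rep cs w⁻¹ : (B →₀ ℝ) →ₗ[ℝ] (B →₀ ℝ))

lemma act_apply (w : W) (F : (B →₀ ℝ) →ₗ[ℝ] ℝ) (v : B →₀ ℝ) :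
    act cs w F v = F (rep cs w⁻¹ v) := rfl

lemma act_one (F : (B →₀ ℝ) →ₗ[ℝ] ℝ) : act cs 1 F = F := by
  ext; simp [act_apply]

lemma act_mul (u w : W) (F : (B →₀ ℝ) →ₗ[ℝ] ℝ) : act cs (u * w) F = act cs u (act cs w F) := by
  ext1 v
  ext
  simp [act_apply]

lemma act_inv_eq {w : W} {F G : (B →₀ ℝ) →ₗ[ℝ] ℝ} (h : act cs w F = G) : act cs w⁻¹ G = F := by
  rw [← h, ← act_mul, inv_mul_cancel, act_one]

lemma act_simple {t : B} {F : (B →₀ ℝ) →ₗ[ℝ] ℝ} (h : F (α t) = 0) :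
    act cs (cs.simple t) F = F := by
  ext1 v
  ext
  simp only [act_apply, inv_simple, rep_simple_apply, LinearMap.comp_apply, map_sub, map_smul, h]
  simp

lemma functional_apply (F : (B →₀ ℝ) →ₗ[ℝ] ℝ) (v : B →₀ ℝ) :
    F v = v.sum fun i c => c * F (α i) := by
  conv_lhs => rw [← Finsupp.sum_single v]
  rw [Finsupp.sum, Finsupp.sum, map_sum]
  refine Finset.sum_congr rfl fun i _ => ?_
  rw [← smul_eq_mul, ← map_smul]
  simp

lemma functional_nonneg {T : Set B} {F : (B →₀ ℝ) →ₗ[ℝ] ℝ} (hF : ∀ t ∈ T, 0 ≤ F (α t))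
    {v : B →₀ ℝ} (hv : 0 ≤ v) (hT : ∀ j, j ∉ T → v j = 0) : 0 ≤ F v := by
  rw [functional_apply]
  refine Finset.sum_nonneg fun i hi => mul_nonneg (hv i) (hF i ?_)
  by_contra h
  exact (Finsupp.mem_support_iff.mp hi) (hT i h)

lemma functional_nonpos {T : Set B} {F : (B →₀ ℝ) →ₗ[ℝ] ℝ} (hF : ∀ t ∈ T, F (α t) ≤ 0)
    {v : B →₀ ℝ} (hv : 0 ≤ v) (hT : ∀ j, j ∉ T → v j = 0) : F v ≤ 0 := by
  have := functional_nonneg (F := -F) (T := T) (by simpa using hF) hv hT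
  simpa using this

/-- The stabilizer in a parabolic subgroup of a functional lying in its fundamental chamber is
generated by simple reflections. -/
lemma mem_par_of_act_eq {T : Set B} {F : (B →₀ ℝ) →ₗ[ℝ] ℝ} (hF : ∀ t ∈ T, 0 ≤ F (α t)) {h : W}
    (hh : h ∈ par cs T) (he : act cs h F = F) : h ∈ par cs {t | t ∈ T ∧ F (α t) = 0} := by
  induction hn : cs.length h using Nat.strong_induction_on generalizing h with
  | _ n ih =>
    by_cases h1 : h = 1
    · rw [h1]; exact one_mem _
    obtain ⟨t, ht, hd⟩ := exists_descent (inv_mem hh) (inv_ne_one.mpr h1)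
    have hz : F (α t) = 0 := by
      refine le_antisymm ?_ (hF t ht)
      have e : F (α t) = F (rep cs h⁻¹ (α t)) := by
        conv_lhs => rw [← he]
        rw [act_apply]
      have := functional_nonneg hF (v := - rep cs h⁻¹ (α t)) (neg_nonneg.mpr hd) (by
        intro j hj
        have : j ≠ t := by rintro rfl; exact hj ht
        rw [Finsupp.neg_apply, rep_par_coord (inv_mem hh) hj]
        simp [this.symm])
      rw [map_neg] at this
      linarith
    have hl := length_lt_of_rep_nonpos cs hd
    have hl' := cs.length_inv (cs.simple t * h)
    rw [mul_inv_rev, inv_simple] at hl'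
    rw [hl', cs.length_inv] at hl
    have hm := mul_mem (simple_mem_par (cs := cs) ht) hh
    have := ih _ (hn ▸ hl) hm (by rw [act_mul, he, act_simple hz]) rfl
    have h2 := mul_mem (simple_mem_par (cs := cs) (T := {t | t ∈ T ∧ F (α t) = 0})
      (t := t) ⟨ht, hz⟩) this
    simpa using h2

/-- A functional that is negative on finitely many positive roots can be moved into the fundamental
chamber of a parabolic subgroup. -/
lemma exists_dominant (T : Set B) (F : (B →₀ ℝ) →ₗ[ℝ] ℝ)
    (hfin : {v | PosRoot cs v ∧ F v < 0}.Finite) :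
    ∃ w ∈ par cs T, ∀ t ∈ T, 0 ≤ act cs w F (α t) := by
  induction hn : {v | PosRoot cs v ∧ F v < 0}.ncard using Nat.strong_induction_on
    generalizing F with
  | _ n ih =>
    by_cases hd : ∀ t ∈ T, 0 ≤ F (α t)
    · exact ⟨1, one_mem _, by simpa [act_one] using hd⟩
    push Not at hd
    obtain ⟨t, ht, hneg⟩ := hd
    have himg : rep cs (cs.simple t) '' {v | PosRoot cs v ∧ act cs (cs.simple t) F v < 0} ⊆
        {v | PosRoot cs v ∧ F v < 0} \ {α t} := by
      rintro _ ⟨v, ⟨hv, hl⟩, rfl⟩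
      rw [act_apply, inv_simple] at hl
      refine ⟨⟨hv.simple ?_, hl⟩, ?_⟩
      · rintro rfl
        rw [rep_simple_self, map_neg] at hl
        linarith
      · intro he
        have h2 := congrArg (rep cs (cs.simple t)) (Set.mem_singleton_iff.mp he)
        rw [← rep_mul_apply, simple_mul_simple_self, rep_simple_self] at h2
        simp only [map_one, LinearEquiv.coe_one, id] at h2
        exact hv.not_nonpos (by rw [h2]; simp)
    have hinj := (rep cs (cs.simple t)).injective
    have hfin' : {v | PosRoot cs v ∧ act cs (cs.simple t) F v < 0}.Finite :=
      Set.Finite.of_finite_image (hfin.sdiff.subset himg) hinj.injOn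
    have hlt : {v | PosRoot cs v ∧ act cs (cs.simple t) F v < 0}.ncard < n := by
      rw [← hn, ← Set.ncard_image_of_injective _ hinj]
      refine (Set.ncard_le_ncard himg hfin.sdiff).trans_lt ?_
      exact Set.ncard_sdiff_singleton_lt_of_mem ⟨posRoot_α t, hneg⟩ hfin
    obtain ⟨w, hw, hdom⟩ := ih _ hlt _ hfin' rfl
    exact ⟨w * cs.simple t, mul_mem hw (simple_mem_par ht), by simpa [act_mul] using hdom⟩

open scoped Classical in
/-- The functional vanishing on the simple roots in `T` and equal to one on the others. -/
noncomputable def lam (T : Set B) : (B →₀ ℝ) →ₗ[ℝ] ℝ :=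
  Finsupp.linearCombination ℝ (fun i => if i ∈ T then 0 else 1)

lemma lam_of_mem {T : Set B} {t : B} (ht : t ∈ T) : lam T (α t) = 0 := by simp [lam, ht]

lemma lam_of_notMem {T : Set B} {t : B} (ht : t ∉ T) : lam T (α t) = 1 := by simp [lam, ht]

lemma lam_nonneg (T : Set B) (t : B) : 0 ≤ lam T (α t) := by
  by_cases h : t ∈ T
  · rw [lam_of_mem h]
  · rw [lam_of_notMem h]; exact zero_le_one

lemma lam_apply_nonneg (T : Set B) {v : B →₀ ℝ} (hv : 0 ≤ v) : 0 ≤ lam T v :=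
  functional_nonneg (T := Set.univ) (fun t _ => lam_nonneg T t) hv (by simp)

lemma lam_empty_pos {v : B →₀ ℝ} (hv : 0 ≤ v) (h0 : v ≠ 0) : 0 < lam (∅ : Set B) v := by
  rw [functional_apply]
  refine Finset.sum_pos (fun i hi => ?_) (by simpa using h0)
  simp only [lam_of_notMem (Set.notMem_empty i), mul_one]
  exact lt_of_le_of_ne (hv i) (Ne.symm (Finsupp.mem_support_iff.mp hi))

/-- Standard parabolic subgroups are stabilizers of functionals. -/
lemma mem_par_iff_act {T : Set B} {h : W} : h ∈ par cs T ↔ act cs h (lam T) = lam T := by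
  constructor
  · intro hh
    induction hh using par_induction with
    | one => exact act_one _
    | step h _ t ht _ ih => rw [act_mul, act_simple (lam_of_mem ht), ih]
  · intro he
    have := mem_par_of_act_eq (T := Set.univ) (fun t _ => lam_nonneg T t)
      (by rw [par_univ]; trivial) he
    refine par_mono ?_ this
    rintro t ⟨-, ht⟩
    by_contra h
    rw [lam_of_notMem h] at ht
    exact one_ne_zero ht

lemma par_inter {T U : Set B} {h : W} (h1 : h ∈ par cs T) (h2 : h ∈ par cs U) :
    h ∈ par cs (T ∩ U) := by
  refine par_mono ?_ (mem_par_of_act_eq (fun t _ => lam_nonneg U t) h1 (mem_par_iff_act.mp h2))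
  rintro t ⟨ht, h0⟩
  refine ⟨ht, ?_⟩
  by_contra h
  rw [lam_of_notMem h] at h0
  exact one_ne_zero h0

lemma simple_mem_par_iff {T : Set B} {t : B} : cs.simple t ∈ par cs T ↔ t ∈ T := by
  refine ⟨fun h => ?_, simple_mem_par⟩
  by_contra ht
  have h2 := rep_par_coord h ht (α t)
  rw [rep_simple_self] at h2
  simp at h2
  linarith

/-- The intersection of a standard parabolic subgroup with a conjugate of another one is conjugate
in the first to a standard parabolic subgroup. -/
lemma par_inter_conj (T U : Set B) (x : W) :
    ∃ w ∈ par cs T, ∃ K ⊆ T, ∀ h, (h ∈ par cs T ∧ x⁻¹ * h * x ∈ par cs U) ↔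
      w⁻¹ * h * w ∈ par cs K := by
  have hfin : {v | PosRoot cs v ∧ act cs x (lam U) v < 0}.Finite := by
    refine (inversions_finite (cs := cs) x⁻¹).subset ?_
    rintro v ⟨hv, hl⟩
    refine ⟨hv, hv.neg_of_not fun h => ?_⟩
    exact absurd (lam_apply_nonneg U h) (not_le.mpr hl)
  obtain ⟨w, hw, hd⟩ := exists_dominant T _ hfin
  set F := act cs w (act cs x (lam U)) with hF
  refine ⟨w⁻¹, inv_mem hw, {t | t ∈ T ∧ F (α t) = 0}, fun t ht => ht.1, fun h => ?_⟩
  rw [inv_inv]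
  have e : x⁻¹ * h * x ∈ par cs U ↔ act cs (w * h * w⁻¹) F = F := by
    have e1 : act cs (w * h * w⁻¹) F = act cs (w * x) (act cs (x⁻¹ * h * x) (lam U)) := by
      rw [hF, ← act_mul, ← act_mul, ← act_mul]; congr 1; group
    have e2 : F = act cs (w * x) (lam U) := by rw [hF, act_mul]
    rw [mem_par_iff_act, e1]
    constructor
    · intro h; rw [h, e2]
    · intro h
      rw [← act_inv_eq h, act_inv_eq e2.symm]
  constructor
  · rintro ⟨h1, h2⟩
    exact mem_par_of_act_eq hd (mul_mem (mul_mem hw h1) (inv_mem hw)) (e.mp h2)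
  · intro hh
    have hT : w * h * w⁻¹ ∈ par cs T := par_mono (fun t ht => ht.1) hh
    refine ⟨?_, e.mpr ?_⟩
    · have := mul_mem (mul_mem (inv_mem hw) hT) hw
      simpa [mul_assoc] using this
    · clear hT e
      generalize w * h * w⁻¹ = g at hh ⊢
      induction hh using par_induction with
      | one => exact act_one _
      | step h _ t ht _ ih => rw [act_mul, act_simple ht.2, ih]

/-! ### Finite parabolic subgroups -/

lemma par_finite_of_roots [Finite B] {J : Set B}
    (h : {v | PosRoot cs v ∧ ∀ j, j ∉ J → v j = 0}.Finite) : Finite (par cs J) := by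
  set R := {v | PosRoot cs v ∧ ∀ j, j ∉ J → v j = 0} with hR
  have hR2 : Finite ↥(R ∪ -R) := (h.union h.neg).to_subtype
  have key : ∀ g ∈ par cs J, ∀ j ∈ J, rep cs g (α j) ∈ R ∪ -R := by
    intro g hg j hj
    have hs : ∀ k, k ∉ J → rep cs g (α j) k = 0 := by
      intro k hk
      rw [rep_par_coord hg hk]
      have : j ≠ k := by rintro rfl; exact hk hj
      simp [this]
    rcases rep_pos_or_neg cs g j with hp | hp
    · exact Or.inl ⟨⟨hp, g, j, rfl⟩, hs⟩
    · refine Or.inr ⟨⟨neg_nonneg.mpr hp, g * cs.simple j, j, ?_⟩, fun k hk => by simp [hs k hk]⟩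
      rw [rep_mul_apply, rep_simple_self, map_neg]
  let f : par cs J → (J → ↥(R ∪ -R)) := fun g j => ⟨rep cs g (α j), key g g.2 j j.2⟩
  refine Finite.of_injective f ?_
  intro g g' he
  by_contra hne
  have hne' : (g' : W)⁻¹ * g ≠ 1 := by
    intro h'
    exact hne (Subtype.ext (inv_mul_eq_one.mp h').symm)
  obtain ⟨t, ht, hd⟩ := exists_descent (mul_mem (inv_mem g'.2) g.2) hne'
  have h1 : rep cs g (α t) = rep cs g' (α t) := congrArg Subtype.val (congrFun he ⟨t, ht⟩)
  rw [rep_mul_apply, h1, rep_inv_apply] at hd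
  exact (posRoot_α (cs := cs) t).not_nonpos hd

lemma par_finite_of_neg [Finite B] {J : Set B} {w : W} (h : ∀ j ∈ J, rep cs w (α j) ≤ 0) :
    Finite (par cs J) := by
  apply par_finite_of_roots
  refine (inversions_finite (cs := cs) w).subset ?_
  rintro v ⟨hv, hJ⟩
  refine ⟨hv, fun k => ?_⟩
  exact functional_nonpos (T := J) (F := (Finsupp.lapply k) ∘ₗ (rep cs w).toLinearMap)
    (fun t ht => h t ht k) hv.1 hJ

variable (cs) in
/-- The sum of the orbit of the functional `lam ∅` under a finite subgroup. -/
noncomputable def avg (H : Subgroup W) [Fintype H] : (B →₀ ℝ) →ₗ[ℝ] ℝ :=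
  ∑ h : H, act cs h (lam ∅)

lemma avg_apply (H : Subgroup W) [Fintype H] (v : B →₀ ℝ) :
    avg cs H v = ∑ h : H, lam ∅ (rep cs (h : W)⁻¹ v) := by
  simp [avg, act_apply]

lemma act_avg (H : Subgroup W) [Fintype H] {g : W} (hg : g ∈ H) : act cs g (avg cs H) = avg cs H := by
  ext1 v
  ext
  simp only [LinearMap.comp_apply, act_apply, avg_apply]
  refine Fintype.sum_equiv (Equiv.mulLeft (⟨g, hg⟩ : H)) _ _ fun h => ?_
  simp

lemma avg_α_eq_zero (H : Subgroup W) [Fintype H] {t : B} (ht : cs.simple t ∈ H) :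
    avg cs H (α t) = 0 := by
  have h1 : act cs (cs.simple t) (avg cs H) (α t) = avg cs H (α t) := by rw [act_avg H ht]
  rw [act_apply, inv_simple, rep_simple_self, map_neg] at h1
  linarith

lemma avg_finite (H : Subgroup W) [Fintype H] (w : W) :
    {v | PosRoot cs v ∧ avg cs H (rep cs w v) ≤ 0}.Finite := by
  refine (Set.finite_iUnion fun h : H => inversions_finite (cs := cs) ((h : W)⁻¹ * w)).subset ?_
  rintro v ⟨hv, hl⟩
  by_contra hcon
  simp only [Set.mem_iUnion, Set.mem_ofPred_eq, not_exists, not_and] at hcon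
  rw [avg_apply] at hl
  refine absurd hl (not_le.mpr (Finset.sum_pos (fun h _ => ?_) ⟨1, Finset.mem_univ _⟩))
  rw [← rep_mul_apply]
  exact lam_empty_pos ((hv.pos_or_neg _).resolve_right (hcon h hv)) (rep_ne_zero cs _ hv.ne_zero)

/-- Tits' theorem: a finite subgroup is contained in a conjugate of a finite standard parabolic. -/
lemma finite_le_conj_par [Finite B] (H : Subgroup W) [Finite H] :
    ∃ (x : W) (J : Set B), Finite (par cs J) ∧ ∀ h ∈ H, x⁻¹ * h * x ∈ par cs J := by
  have := Fintype.ofFinite H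
  have hfin : {v | PosRoot cs v ∧ avg cs H v < 0}.Finite := by
    refine (avg_finite (cs := cs) H 1).subset ?_
    rintro v ⟨hv, hl⟩
    exact ⟨hv, by simpa using hl.le⟩
  obtain ⟨w, -, hd⟩ := exists_dominant Set.univ _ hfin
  refine ⟨w⁻¹, {t | t ∈ Set.univ ∧ act cs w (avg cs H) (α t) = 0}, ?_, ?_⟩
  · apply par_finite_of_roots
    refine (avg_finite (cs := cs) H w⁻¹).subset ?_
    rintro v ⟨hv, hJ⟩
    refine ⟨hv, ?_⟩
    have : act cs w (avg cs H) v ≤ 0 := functional_nonpos (fun t ht => ht.2.le) hv.1 hJ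
    exact this
  · intro h hh
    refine mem_par_of_act_eq hd (by rw [par_univ]; trivial) ?_
    rw [inv_inv, ← act_mul, inv_mul_cancel_right, act_mul, act_avg H hh]

variable (cs) in
/-- `T` is maximal among the subsets generating a finite parabolic subgroup. -/
def MaxSph (T : Set B) : Prop :=
  Finite (par cs T) ∧ ∀ U, T ⊆ U → Finite (par cs U) → U ⊆ T

lemma exists_maxSph [Finite B] {J : Set B} (hJ : Finite (par cs J)) :
    ∃ T, J ⊆ T ∧ MaxSph cs T := by
  obtain ⟨T, hT, hmax⟩ := Set.Finite.exists_le_maximal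
    (s := {U : Set B | Finite (par cs U)}) (Set.toFinite _) hJ
  exact ⟨T, hT, hmax.prop, fun U h1 h2 => hmax.le_of_ge h2 h1⟩

/-- A maximal finite standard parabolic subgroup is a maximal finite subgroup. -/
lemma MaxSph.maximal [Finite B] {T : Set B} (hT : MaxSph cs T) (H : Subgroup W) [Finite H]
    (hH : par cs T ≤ H) : H ≤ par cs T := by
  have := Fintype.ofFinite H
  have h0 : ∀ t ∈ T, avg cs H (α t) = 0 := fun t ht => avg_α_eq_zero H (hH (simple_mem_par ht))
  have h1 : ∀ y, y ∉ T → 0 < avg cs H (α y) := by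
    intro y hy
    by_contra hcon
    refine hy (hT.2 (insert y T) (Set.subset_insert _ _) ?_ (Set.mem_insert _ _))
    apply par_finite_of_roots
    refine (avg_finite (cs := cs) H 1).subset ?_
    rintro v ⟨hv, hJ⟩
    refine ⟨hv, ?_⟩
    rw [map_one]
    refine functional_nonpos ?_ hv.1 hJ
    rintro t (rfl | ht)
    · exact not_lt.mp hcon
    · exact (h0 t ht).le
  intro h hh
  have h2 : ∀ t ∈ (Set.univ : Set B), 0 ≤ avg cs H (α t) := by
    intro t _
    by_cases ht : t ∈ T
    · exact (h0 t ht).ge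
    · exact (h1 t ht).le
  refine par_mono ?_ (mem_par_of_act_eq h2 (by rw [par_univ]; trivial) (act_avg H hh))
  rintro t ⟨-, ht⟩
  by_contra h'
  exact (h1 t h').ne' ht

end Geo

section Sph
variable {B : Type*} {M : CoxeterMatrix B} {cs : CoxeterSystem M W}

/-! ### Restrictions on finite parabolic subgroups -/

lemma coroot_nonpos {i j : B} (h : i ≠ j) : coroot M i (α j) ≤ 0 := by
  rw [coroot_α]
  have h1 := M.off_diagonal i j h
  by_cases h0 : M i j = 0
  · rw [h0]; simp
  have : (2 : ℝ) ≤ M i j := by exact_mod_cast (by omega : 2 ≤ M i j)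
  have : 0 ≤ cos (π / M i j) := by
    apply cos_nonneg_of_neg_pi_div_two_le_of_le
    · have := pi_pos
      have : 0 < π / M i j := by positivity
      linarith
    · exact div_le_div_of_nonneg_left pi_pos.le (by norm_num) this
  linarith

lemma coroot_le_cos {i j : B} {k : ℕ} (hk : 1 ≤ k) (h : k ≤ M i j) :
    coroot M i (α j) ≤ -(2 * cos (π / k)) := by
  rw [coroot_α]
  have h1 : (1 : ℝ) ≤ k := by exact_mod_cast hk
  have h2 : (k : ℝ) ≤ M i j := by exact_mod_cast h
  have h3 : (0 : ℝ) < k := by linarith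
  have h4 : (0 : ℝ) < M i j := by linarith
  have := pi_pos
  have : cos (π / k) ≤ cos (π / M i j) := by
    apply cos_le_cos_of_nonneg_of_le_pi
    · have : 0 < π / M i j := by positivity
      linarith
    · rw [div_le_iff₀ (by positivity)]; nlinarith
    · exact div_le_div_of_nonneg_left pi_pos.le (by positivity) h2
  linarith

lemma coroot_le_three {i j : B} (h : 3 ≤ M i j) : coroot M i (α j) ≤ -1 := by
  have := coroot_le_cos (by norm_num) h
  push_cast at this
  rw [cos_pi_div_three] at this
  linarith

lemma coroot_le_four {i j : B} (h : 4 ≤ M i j) : coroot M i (α j) ≤ -√2 := by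
  have := coroot_le_cos (by norm_num) h
  push_cast at this
  rw [cos_pi_div_four] at this
  linarith

lemma coroot_le_six {i j : B} (h : 6 ≤ M i j) : coroot M i (α j) ≤ -√3 := by
  have := coroot_le_cos (by norm_num) h
  push_cast at this
  rw [cos_pi_div_six] at this
  linarith

/-- In a finite parabolic subgroup, the form is definite enough: a nonnegative vector on which
all simple coroots are nonpositive vanishes. -/
lemma eq_zero_of_coroot_nonpos {T : Set B} (hT : Finite (par cs T)) {v : B →₀ ℝ} (hv : 0 ≤ v)
    (hs : ∀ j, j ∉ T → v j = 0) (hc : ∀ t ∈ T, coroot M t v ≤ 0) : v = 0 := by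
  have := Fintype.ofFinite (par cs T)
  have h1 : ∀ h ∈ par cs T, v ≤ rep cs h v := by
    intro h hh
    induction hh using par_induction with
    | one => simp
    | step h _ t ht hp ih =>
      rw [rep_mul_apply, rep_simple_apply, map_sub, map_smul]
      have := smul_nonneg (neg_nonneg.mpr (hc t ht)) hp
      rw [neg_smul] at this
      exact ih.trans (by rw [sub_eq_add_neg]; exact le_add_of_nonneg_right this)
  have h0 : avg cs (par cs T) v = 0 := by
    have hz : ∀ t ∈ T, avg cs (par cs T) (α t) = 0 :=
      fun t ht => avg_α_eq_zero _ (simple_mem_par ht)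
    exact le_antisymm (functional_nonpos (fun t ht => (hz t ht).le) hv hs)
      (functional_nonneg (fun t ht => (hz t ht).ge) hv hs)
  by_contra hne
  rw [avg_apply] at h0
  refine h0.not_gt (Finset.sum_pos (fun h _ => ?_) ⟨1, Finset.mem_univ _⟩)
  exact lam_empty_pos (hv.trans (h1 _ (inv_mem h.2))) (rep_ne_zero cs _ hne)

lemma sph_ne_zero {T : Set B} (hT : Finite (par cs T)) {s t : B} (hs : s ∈ T) (ht : t ∈ T) :
    M s t ≠ 0 := by
  intro h0
  have hst : s ≠ t := by
    rintro rfl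
    simp at h0
  have e1 : coroot M s (α t) = -2 := by rw [coroot_α, h0]; simp
  have e2 : coroot M t (α s) = -2 := by rw [coroot_symm, e1]
  have : (α s + α t : B →₀ ℝ) = 0 := by
    refine eq_zero_of_coroot_nonpos hT (add_nonneg (by simp) (by simp)) ?_ ?_
    · intro j hj
      have h1 : s ≠ j := by rintro rfl; exact hj hs
      have h2 : t ≠ j := by rintro rfl; exact hj ht
      simp [h1, h2]
    · intro u _
      rw [map_add]
      by_cases h1 : u = s
      · subst h1; rw [coroot_self, e1]; norm_num
      by_cases h2 : u = t
      · subst h2; rw [coroot_self, e2]; norm_num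
      have := coroot_nonpos (M := M) h1
      have := coroot_nonpos (M := M) h2
      linarith
  have := congrArg (fun f => f s) this
  simp [hst.symm] at this

lemma no_triple {T : Set B} (hT : Finite (par cs T)) {s t u : B} (hs : s ∈ T) (ht : t ∈ T)
    (hu : u ∈ T) (hst : s ≠ t) (hsu : s ≠ u) {a b c : ℝ} (ha : 0 < a)
    (hb : 0 ≤ b) (hc : 0 ≤ c)
    (h1 : a * 2 + b * coroot M s (α t) + c * coroot M s (α u) ≤ 0)
    (h2 : a * coroot M s (α t) + b * 2 + c * coroot M t (α u) ≤ 0)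
    (h3 : a * coroot M s (α u) + b * coroot M t (α u) + c * 2 ≤ 0) : False := by
  have hz : (a • α s + b • α t + c • α u : B →₀ ℝ) = 0 := by
    refine eq_zero_of_coroot_nonpos hT (add_nonneg (add_nonneg (smul_nonneg ha.le (by simp))
      (smul_nonneg hb (by simp))) (smul_nonneg hc (by simp))) ?_ ?_
    · intro j hj
      have h1 : s ≠ j := by rintro rfl; exact hj hs
      have h2 : t ≠ j := by rintro rfl; exact hj ht
      have h3 : u ≠ j := by rintro rfl; exact hj hu
      simp [h1, h2, h3]
    · intro x _
      simp only [map_add, map_smul, smul_eq_mul]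
      by_cases e1 : x = s
      · subst e1; rw [coroot_self]; exact h1
      by_cases e2 : x = t
      · subst e2; rw [coroot_self, coroot_symm M x s]; exact h2
      by_cases e3 : x = u
      · subst e3; rw [coroot_self, coroot_symm M x s, coroot_symm M x t]; exact h3
      have := mul_nonpos_of_nonneg_of_nonpos ha.le (coroot_nonpos (M := M) e1)
      have := mul_nonpos_of_nonneg_of_nonpos hb (coroot_nonpos (M := M) e2)
      have := mul_nonpos_of_nonneg_of_nonpos hc (coroot_nonpos (M := M) e3)
      linarith
  have := congrArg (fun f => f s) hz
  simp [hst.symm, hsu.symm] at this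
  exact ha.ne' this

lemma ne_of_ne_one {i j : B} (h : M i j ≠ 1) : i ≠ j := by
  rintro rfl
  simp at h

/-- The diagram of a finite parabolic subgroup contains no triangle. -/
lemma no_triangle {T : Set B} (hT : Finite (par cs T)) {s t u : B} (hs : s ∈ T) (ht : t ∈ T)
    (hu : u ∈ T) (h1 : 3 ≤ M s t) (h2 : 3 ≤ M t u) (h3 : 3 ≤ M s u) : False := by
  have e1 := coroot_le_three h1
  have e2 := coroot_le_three h2
  have e3 := coroot_le_three h3
  exact no_triple hT hs ht hu (ne_of_ne_one (M := M) (by omega)) (ne_of_ne_one (M := M) (by omega))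
    one_pos zero_le_one zero_le_one (by linarith) (by linarith) (by linarith)

/-- An edge labelled at least `6` is not adjacent to another edge, in a finite parabolic. -/
lemma no_three_six {T : Set B} (hT : Finite (par cs T)) {s t u : B} (hs : s ∈ T) (ht : t ∈ T)
    (hu : u ∈ T) (hsu : s ≠ u) (h1 : 3 ≤ M s t) (h2 : 6 ≤ M t u) : False := by
  have e1 := coroot_le_three h1
  have e2 := coroot_le_six h2
  have e3 := coroot_nonpos (M := M) hsu
  have q : √3 * √3 = 3 := mul_self_sqrt (by norm_num)
  have q0 : 0 ≤ √3 := sqrt_nonneg 3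
  refine no_triple hT hs ht hu (ne_of_ne_one (M := M) (by omega)) hsu
    (a := 1) (b := 2) (c := √3) one_pos zero_le_two q0 ?_ ?_ ?_ <;> nlinarith

/-- Two edges labelled at least `4` are not adjacent in a finite parabolic. -/
lemma no_four_four {T : Set B} (hT : Finite (par cs T)) {s t u : B} (hs : s ∈ T) (ht : t ∈ T)
    (hu : u ∈ T) (hsu : s ≠ u) (h1 : 4 ≤ M s t) (h2 : 4 ≤ M t u) : False := by
  have e1 := coroot_le_four h1
  have e2 := coroot_le_four h2
  have e3 := coroot_nonpos (M := M) hsu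
  have q : √2 * √2 = 2 := mul_self_sqrt (by norm_num)
  have q0 : 0 ≤ √2 := sqrt_nonneg 2
  refine no_triple hT hs ht hu (ne_of_ne_one (M := M) (by omega)) hsu
    (a := 1) (b := √2) (c := 1) one_pos q0 zero_le_one ?_ ?_ ?_ <;> nlinarith

lemma alternating_nonpos {i t : B} (hM : M i t ≠ 0) :
    rep cs (cs.wordProd (alternatingWord i t (M i t))) (α t) ≤ 0 := by
  obtain ⟨k, hk⟩ : ∃ k, M i t = k + 1 := ⟨M i t - 1, by omega⟩
  rw [hk, alternatingWord_succ, wordProd_concat, rep_mul_apply, rep_simple_self, map_neg,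
    rep_alternatingWord]
  apply neg_nonpos.mpr
  by_cases h1 : M i t = 1
  · have : k = 0 := by omega
    subst this
    simp [qseq]
  rw [M.symmetric t i]
  have q1 := qseq_nonneg (M i t) k h1 (by omega)
  have q2 := qseq_nonneg (M i t) (k + 1) h1 (by omega)
  split_ifs
  · exact add_nonneg (smul_nonneg q2 (by simp)) (smul_nonneg q1 (by simp))
  · exact add_nonneg (smul_nonneg q1 (by simp)) (smul_nonneg q2 (by simp))

lemma par_pair_finite [Finite B] {i t : B} (hM : M i t ≠ 0) : Finite (par cs {i, t}) := by
  refine par_finite_of_neg (w := cs.wordProd (alternatingWord i t (M i t))) ?_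
  have h1 := alternating_nonpos (cs := cs) hM
  have h2 := alternating_nonpos (cs := cs) (i := t) (t := i) (by rwa [M.symmetric])
  have h3 := cs.wordProd_braidWord_eq i t
  unfold braidWord at h3
  rw [← h3] at h2
  rintro j (rfl | rfl)
  · exact h2
  · exact h1

lemma simple_comm {i j : B} (h : M i j = 2) :
    cs.simple i * cs.simple j = cs.simple j * cs.simple i := by
  have h1 := cs.simple_mul_simple_pow i j
  rw [h, pow_two, mul_eq_one_iff_eq_inv, mul_inv_rev, inv_simple, inv_simple] at h1
  exact h1

/-- The union of two commuting finite parabolic subgroups generates a finite one. -/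
lemma par_union_finite {T U : Set B} (hT : Finite (par cs T)) (hU : Finite (par cs U))
    (hc : ∀ t ∈ T, ∀ u ∈ U, M t u = 2) : Finite (par cs (T ∪ U)) := by
  have h1 : ∀ u ∈ U, ∀ g ∈ par cs T, cs.simple u * g = g * cs.simple u := by
    intro u hu g hg
    have : par cs T ≤ Subgroup.centralizer {cs.simple u} := by
      rw [par, Subgroup.closure_le]
      rintro _ ⟨t, ht, rfl⟩
      rw [SetLike.mem_coe, Subgroup.mem_centralizer_singleton_iff]
      exact simple_comm (hc t ht u hu)
    exact (Subgroup.mem_centralizer_singleton_iff.mp (this hg)).symm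
  have h2 : (par cs (T ∪ U) : Set W) ⊆ Set.image2 (· * ·) (par cs T) (par cs U) := by
    intro g hg
    obtain ⟨ω, hω, rfl⟩ := mem_par_iff.mp hg
    clear hg
    induction ω with
    | nil => exact ⟨1, one_mem _, 1, one_mem _, by simp⟩
    | cons i ω ih =>
      obtain ⟨a, ha, b, hb, hab⟩ := ih fun j hj => hω j (by simp [hj])
      rw [wordProd_cons, ← hab]
      rcases hω i (by simp) with hi | hi
      · exact ⟨_, mul_mem (simple_mem_par hi) ha, b, hb, mul_assoc _ _ _⟩
      · exact ⟨a, ha, _, mul_mem (simple_mem_par hi) hb, by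
          change a * (cs.simple i * b) = cs.simple i * (a * b)
          rw [← mul_assoc, ← mul_assoc, h1 i hi a ha]⟩
  exact ((Set.Finite.image2 _ (Set.toFinite (par cs T : Set W))
    (Set.toFinite (par cs U : Set W))).subset h2).to_subtype

/-! ### Centralizers and special pairs -/

/-- Every coset of a parabolic subgroup has a shortest element. -/
lemma exists_min_coset (g : W) (J : Set B) : ∃ w ∈ par cs J, (∀ j ∈ J, 0 ≤ rep cs (g * w) (α j)) ∧
    ∀ w' ∈ par cs J, cs.length (g * w) ≤ cs.length (g * w') := by
  classical
  have hex : ∃ n, ∃ w ∈ par cs J, cs.length (g * w) = n := ⟨_, 1, one_mem _, rfl⟩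
  obtain ⟨w, hw, hl⟩ := Nat.find_spec hex
  have hmin : ∀ w' ∈ par cs J, cs.length (g * w) ≤ cs.length (g * w') :=
    fun w' hw' => hl ▸ Nat.find_min' hex ⟨w', hw', rfl⟩
  refine ⟨w, hw, fun j hj => ?_, hmin⟩
  by_contra hcon
  have h1 := length_lt_of_rep_nonpos cs ((posRoot_α j).neg_of_not hcon)
  have h2 := hmin _ (mul_mem hw (simple_mem_par hj))
  rw [← mul_assoc] at h2
  omega

/-- If all edges at `v` have even (or infinite) label, `v` has its own sign character. -/
lemma exists_char {v : B} (h : ∀ j, j ≠ v → Even (M v j)) :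
    ∃ χ : W →* ℤˣ, χ (cs.simple v) = -1 ∧ ∀ j, j ≠ v → χ (cs.simple j) = 1 := by
  classical
  let f : B → ℤˣ := fun j => if j = v then -1 else 1
  have hf : M.IsLiftable f := by
    intro i j
    by_cases hi : i = v <;> by_cases hj : j = v
    · simp [f, hi, hj]
    · subst hi
      obtain ⟨k, hk⟩ := h j hj
      simp [f, hj, hk, pow_add, ← mul_pow]
    · subst hj
      obtain ⟨k, hk⟩ := h i hi
      rw [M.symmetric] at hk
      simp [f, hi, hk, pow_add, ← mul_pow]
    · simp [f, hi, hj]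
  refine ⟨cs.lift ⟨f, hf⟩, ?_, fun j hj => ?_⟩
  · rw [lift_apply_simple]; simp [f]
  · rw [lift_apply_simple]; simp [f, hj]

lemma eq_of_conj_simple {v t : B} (h : ∀ j, j ≠ v → Even (M v j)) {x : W}
    (hx : x * cs.simple t * x⁻¹ = cs.simple v) : t = v := by
  obtain ⟨χ, h1, h2⟩ := exists_char (cs := cs) h
  by_contra hne
  have := congrArg χ hx
  rw [map_mul, map_mul, map_inv, h1, h2 t hne] at this
  simp at this

/-- If all edges at `v` are even, the stabilizer of the root `α_v` is contained in the parabolic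
subgroup generated by `v` and its finite neighbours (commuting ones included). -/
lemma mem_par_of_fix [Finite B] {v : B} (h : ∀ j, j ≠ v → Even (M v j)) {g : W}
    (hg : rep cs g (α v) = α v) : g ∈ par cs {y | M v y ≠ 0} := by
  have hv : v ∈ {y | M v y ≠ 0} := by simp
  induction hn : cs.length g using Nat.strong_induction_on generalizing g with
  | _ n ih =>
    by_cases h1 : g = 1
    · rw [h1]; exact one_mem _
    obtain ⟨y, -, hy⟩ := exists_descent (cs := cs) (T := Set.univ) (h := g) (by rw [par_univ]; trivial) h1
    have hyv : y ≠ v := by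
      rintro rfl
      rw [hg] at hy
      exact (posRoot_α (cs := cs) y).not_nonpos hy
    -- `g s_v` makes both `α_v` and `α_y` negative
    have hneg : ∀ j ∈ ({v, y} : Set B), rep cs (g * cs.simple v) (α j) ≤ 0 := by
      rintro j (rfl | rfl)
      · rw [rep_mul_apply, rep_simple_self, map_neg, hg]; simp
      · by_contra hcon
        have hp := ((rep_pos_or_neg cs (g * cs.simple v) j).resolve_right hcon)
        have e : rep cs (g * cs.simple v) (α j) = rep cs g (α j) - coroot M v (α j) • α v := by
          rw [rep_mul_apply, rep_simple_apply, map_sub, map_smul, hg]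
        have hpos : PosRoot cs (- rep cs g (α j)) :=
          ⟨neg_nonneg.mpr hy, g * cs.simple j, j, by
            rw [rep_mul_apply, rep_simple_self, map_neg]⟩
        have h2 := hpos.eq_α (t := v) (fun k hk => by
          have h3 := hp k
          rw [e] at h3
          simp [hk.symm] at h3
          have h4 : rep cs g (α j) k ≤ 0 := hy k
          simp only [Finsupp.neg_apply]
          linarith)
        rw [← hg, ← map_neg] at h2
        have h3 := (rep cs g).injective h2
        exact (posRoot_α (cs := cs) j).not_nonpos
          (by rw [← neg_neg (α j), h3]; simp)
    have hM : M v y ≠ 0 :=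
      sph_ne_zero (par_finite_of_neg hneg) (Set.mem_insert _ _) (Set.mem_insert_of_mem _ rfl)
    have hsub : ({v, y} : Set B) ⊆ {y | M v y ≠ 0} := by
      rintro j (rfl | rfl)
      · exact hv
      · exact hM
    obtain ⟨w, hw, hp, hmin⟩ := exists_min_coset (cs := cs) g {v, y}
    have hlt : cs.length (g * w) < n := by
      have h2 := hmin _ (simple_mem_par (t := y) (Set.mem_insert_of_mem _ rfl))
      have := length_lt_of_rep_nonpos cs hy
      omega
    have hpv := hp v (Set.mem_insert _ _)
    have hpy := hp y (Set.mem_insert_of_mem _ rfl)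
    -- write `w⁻¹ α_v = p α_v + q α_y`
    obtain ⟨p, q, hpq⟩ : ∃ p q : ℝ, rep cs w⁻¹ (α v) = p • α v + q • α y := by
      refine ⟨rep cs w⁻¹ (α v) v, rep cs w⁻¹ (α v) y, ?_⟩
      ext k
      by_cases h2 : k = v
      · subst h2; simp [hyv]
      by_cases h3 : k = y
      · subst h3; simp [hyv.symm]
      rw [rep_par_coord (inv_mem hw) (by simp [h2, h3])]
      simp [Ne.symm h2, Ne.symm h3]
    have hsum : p • rep cs (g * w) (α v) + q • rep cs (g * w) (α y) = α v := by
      rw [← map_smul, ← map_smul, ← map_add, ← hpq, ← rep_mul_apply, mul_inv_cancel_right, hg]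
    have hsign : 0 ≤ p ∧ 0 ≤ q := by
      rcases rep_pos_or_neg cs w⁻¹ v with h2 | h2
      · rw [hpq] at h2
        have a1 := h2 v
        have a2 := h2 y
        simp [hyv] at a1
        simp [hyv.symm] at a2
        exact ⟨a1, a2⟩
      · exfalso
        rw [hpq] at h2
        have a1 := h2 v
        have a2 := h2 y
        simp [hyv] at a1
        simp [hyv.symm] at a2
        have b1 := smul_nonneg (neg_nonneg.mpr a1) hpv
        have b2 := smul_nonneg (neg_nonneg.mpr a2) hpy
        have b3 := add_nonneg b1 b2
        rw [neg_smul, neg_smul, ← neg_add, hsum] at b3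
        exact (posRoot_α (cs := cs) v).not_nonpos (neg_nonneg.mp b3)
    have hco : ∀ k, k ≠ v → p * rep cs (g * w) (α v) k = 0 ∧ q * rep cs (g * w) (α y) k = 0 := by
      intro k hk
      have h2 := congrArg (fun f => f k) hsum
      simp only [Finsupp.add_apply, Finsupp.smul_apply, smul_eq_mul,
        Finsupp.single_eq_of_ne hk] at h2
      have b1 := mul_nonneg hsign.1 (hpv k)
      have b2 := mul_nonneg hsign.2 (hpy k)
      exact ⟨by linarith, by linarith⟩
    have hq : q = 0 := by
      by_contra hq
      have h2 := ((posRoot_α y).rep hpy).eq_α (t := v)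
        fun k hk => (mul_eq_zero.mp (hco k hk).2).resolve_left hq
      exact hyv (eq_of_conj_simple h (conj_of_rep_eq h2))
    have hp0 : p ≠ 0 := by
      rintro rfl
      rw [hq] at hsum
      simp at hsum
      exact absurd hsum.symm (by simp)
    have h2 := ((posRoot_α v).rep hpv).eq_α (t := v)
      fun k hk => (mul_eq_zero.mp (hco k hk).1).resolve_left hp0
    have h3 := mul_mem (ih _ hlt h2 rfl) (par_mono hsub (inv_mem hw))
    simpa using h3

/-- The key property of special pairs: a conjugate of a maximal finite standard parabolic subgroup
containing the distinguished vertex `v` of a special pair `v, v'` contains `(v v')²`. -/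
lemma special_mem [Finite B] {v v' : B} (hne : v ≠ v') (hm : M v v' % 4 = 2)
    (hs : ∀ s, s ≠ v → s ≠ v' → M s v ≠ 0 → M s v = 2 ∧ M s v' = 2) {T : Set B}
    (hT : MaxSph cs T) {x : W} (hx : x⁻¹ * cs.simple v * x ∈ par cs T) :
    x⁻¹ * (cs.simple v * cs.simple v') ^ 2 * x ∈ par cs T := by
  have heven : ∀ j, j ≠ v → Even (M v j) := by
    intro j hj
    by_cases h1 : j = v'
    · subst h1
      exact Nat.even_iff.mpr (by omega)
    by_cases h2 : M v j = 0
    · rw [h2]; exact Even.zero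
    · rw [M.symmetric, (hs j hj h1 (by rwa [M.symmetric])).1]; exact even_two
  set ρ := (cs.simple v * cs.simple v') ^ 2 with hρ
  -- move `x` inside its coset so that some simple root of `T` is carried to `α_v`
  obtain ⟨h, hh, t, ht, hxt⟩ : ∃ h ∈ par cs T, ∃ t ∈ T, rep cs (x * h) (α t) = α v := by
    have key : ∀ β, PosRoot cs β → (rep cs x β = α v ∨ rep cs x β = - α v) →
        ∃ h ∈ par cs T, ∃ t ∈ T, rep cs (x * h) (α t) = α v := by
      intro β hβ hxβ
      obtain ⟨ω, hω, hωp⟩ := mem_par_iff.mp hx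
      have hr : rep cs (cs.wordProd ω) β = -β := by
        have e : rep cs x⁻¹ (rep cs x β) = β := rep_inv_apply cs x β
        rw [hωp, mul_assoc, rep_mul_apply, rep_mul_apply]
        rcases hxβ with h | h
        · rw [h, rep_simple_self, map_neg, ← h, e]
        · have e' : rep cs x⁻¹ (α v) = -β := by rw [← neg_neg (α v), ← h, map_neg, e]
          rw [h, map_neg, rep_simple_self, neg_neg, e']
      obtain ⟨ω₁, t, ω₂, rfl, h2⟩ := exists_crossing ω hβ
        (by rw [hr]; exact neg_nonpos.mpr hβ.1)
      have ht : t ∈ T := hω t (by simp)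
      have hm2 : cs.wordProd ω₂ ∈ par cs T := mem_par_iff.mpr ⟨ω₂, fun i hi => hω i (by simp [hi]), rfl⟩
      have h3 : rep cs (x * (cs.wordProd ω₂)⁻¹) (α t) = rep cs x β := by
        rw [rep_mul_apply, ← h2, rep_inv_apply]
      rcases hxβ with h | h
      · exact ⟨_, inv_mem hm2, t, ht, by rw [h3, h]⟩
      · refine ⟨_, mul_mem (inv_mem hm2) (simple_mem_par ht), t, ht, ?_⟩
        rw [← mul_assoc, rep_mul_apply, rep_simple_self, map_neg, h3, h, neg_neg]
    rcases rep_pos_or_neg cs x⁻¹ v with hp | hp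
    · exact key _ ⟨hp, x⁻¹, v, rfl⟩ (Or.inl (rep_apply_inv cs x _))
    · refine key (- rep cs x⁻¹ (α v)) ⟨neg_nonneg.mpr hp, x⁻¹ * cs.simple v, v, ?_⟩
        (Or.inr (by rw [map_neg, rep_apply_inv]))
      rw [rep_mul_apply, rep_simple_self, map_neg]
  obtain rfl : t = v := eq_of_conj_simple heven (conj_of_rep_eq hxt)
  have hG := mem_par_of_fix heven hxt
  have hv'T : v' ∈ T := by
    have hfin : Finite (par cs ({t, v'} ∪ (T \ {t, v'}))) := by
      refine par_union_finite (par_pair_finite (by omega)) ?_ ?_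
      · have := hT.1
        exact Finite.of_injective _ (Subgroup.inclusion_injective
          (par_mono (cs := cs) (Set.sdiff_subset (s := T) (t := {t, v'}))))
      · rintro a ha s ⟨hsT, hs2⟩
        simp only [Set.mem_insert_iff, Set.mem_singleton_iff, not_or] at hs2
        have := hs s hs2.1 hs2.2 (sph_ne_zero hT.1 hsT ht)
        rcases ha with rfl | rfl
        · rw [M.symmetric]; exact this.1
        · rw [M.symmetric]; exact this.2
    exact hT.2 _ (by intro s hs'; by_cases h' : s ∈ ({t, v'} : Set B) <;> simp_all) hfin
      (Or.inl (by simp))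
  have hρT : ρ ∈ par cs T := pow_mem (mul_mem (simple_mem_par ht) (simple_mem_par hv'T)) 2
  have e1 : ρ⁻¹ = (cs.simple v' * cs.simple t) ^ 2 := by
    rw [hρ, ← inv_pow, mul_inv_rev, inv_simple, inv_simple]
  have hconj : ∀ g ∈ par cs {y | M t y ≠ 0}, g⁻¹ * ρ * g = ρ ∨ g⁻¹ * ρ * g = ρ⁻¹ := by
    intro g hg
    obtain ⟨ω, hω, rfl⟩ := mem_par_iff.mp hg
    clear hg hG
    have hs1 : ∀ i ∈ {y | M t y ≠ 0}, cs.simple i * ρ * cs.simple i = ρ ∨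
        cs.simple i * ρ * cs.simple i = ρ⁻¹ := by
      intro i hi
      by_cases h1 : i = t
      · right
        rw [e1, hρ, h1, pow_two, pow_two]
        simp [mul_assoc]
      by_cases h2 : i = v'
      · right
        rw [e1, hρ, h2, pow_two, pow_two]
        simp [mul_assoc]
      · left
        obtain ⟨a1, a2⟩ := hs i h1 h2 (by rwa [M.symmetric])
        have c1 : Commute (cs.simple i) (cs.simple t) := simple_comm a1
        have c2 : Commute (cs.simple i) (cs.simple v') := simple_comm a2
        have c3 : Commute (cs.simple i) ρ := (c1.mul_right c2).pow_right 2
        rw [c3.eq, mul_assoc, simple_mul_simple_self, mul_one]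
    induction ω with
    | nil => left; simp
    | cons i ω ih =>
      have e2 : (cs.wordProd (i :: ω))⁻¹ * ρ * cs.wordProd (i :: ω) =
          (cs.wordProd ω)⁻¹ * (cs.simple i * ρ * cs.simple i) * cs.wordProd ω := by
        rw [wordProd_cons, mul_inv_rev, inv_simple]; simp only [mul_assoc]
      have ih' := ih fun j hj => hω j (by simp [hj])
      rw [e2]
      rcases hs1 i (hω i (by simp)) with h1 | h1
      · rw [h1]; exact ih'
      · rw [h1]
        have e3 : (cs.wordProd ω)⁻¹ * ρ⁻¹ * cs.wordProd ω =
            ((cs.wordProd ω)⁻¹ * ρ * cs.wordProd ω)⁻¹ := by group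
        rw [e3]
        rcases ih' with h2 | h2
        · right; rw [h2]
        · left; rw [h2, inv_inv]
  have h1 : (x * h)⁻¹ * ρ * (x * h) ∈ par cs T := by
    rcases hconj _ hG with h2 | h2
    · rw [h2]; exact hρT
    · rw [h2]; exact inv_mem hρT
  have h2 := mul_mem (mul_mem hh h1) (inv_mem hh)
  have e : h * ((x * h)⁻¹ * ρ * (x * h)) * h⁻¹ = x⁻¹ * ρ * x := by group
  rwa [e] at h2

end Sph

section Dih
variable {B : Type*} {M : CoxeterMatrix B} {cs : CoxeterSystem M W}

/-! ### Projection onto an isolated dihedral factor -/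

lemma not_pow_eq_one {a b : B} {k : ℕ} (hk : 0 < k) (hkm : 2 * k ≤ M a b)
    (h : (cs.simple a * cs.simple b) ^ k = 1) : False := by
  have h1 := cs.prod_alternatingWord_eq_mul_pow a b (2 * k)
  have h2 : 2 * k = (2 * k - 1) + 1 := by omega
  rw [if_pos (by simp), one_mul, Nat.mul_div_cancel_left _ (by norm_num), h, h2,
    alternatingWord, List.concat_eq_append, cs.wordProd_append, wordProd_singleton] at h1
  have h3 : cs.wordProd (alternatingWord b a (2 * k - 1)) = cs.simple b := by
    rw [mul_eq_one_iff_eq_inv.mp h1]; simp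
  have h4 := rep_alternatingWord (cs := cs) b a (2 * k - 1)
  rw [h3, rep_simple_self, M.symmetric b a] at h4
  have hm1 : M a b ≠ 1 := by omega
  have q1 := qseq_nonneg (M a b) (2 * k - 1) hm1 (Or.inr (by omega))
  have q2 := qseq_nonneg (M a b) (2 * k - 1 + 1) hm1 (Or.inr (by omega))
  have p1 : (0 : B →₀ ℝ) ≤ α a := by simp
  have p2 : (0 : B →₀ ℝ) ≤ α b := by simp
  have : (0 : B →₀ ℝ) ≤ -α b := by
    rw [h4]; split_ifs <;> positivity
  exact (posRoot_α (cs := cs) b).not_nonpos (by simpa using this)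

/-- The product of two Coxeter generators has order divisible by the entry of the matrix. -/
lemma dvd_of_pow_eq_one {a b : B} (hm : M a b ≠ 0) {k : ℕ}
    (h : (cs.simple a * cs.simple b) ^ k = 1) : M a b ∣ k := by
  have hp := cs.simple_mul_simple_pow a b
  have h1 : (cs.simple a * cs.simple b) ^ (k % M a b) = 1 := by
    rw [← pow_eq_pow_mod k hp, h]
  by_contra hd
  have h0 : 0 < k % M a b := Nat.pos_of_ne_zero fun h => hd (Nat.dvd_of_mod_eq_zero h)
  have hlt : k % M a b < M a b := Nat.mod_lt _ (Nat.pos_of_ne_zero hm)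
  rcases le_total (2 * (k % M a b)) (M a b) with hle | hle
  · exact not_pow_eq_one h0 hle h1
  · refine not_pow_eq_one (cs := cs) (a := a) (b := b) (k := M a b - k % M a b) (by omega)
      (by omega) ?_
    have := hp
    rw [← Nat.sub_add_cancel hlt.le, pow_add, h1, mul_one] at this
    exact this

/-- `p` is multiplicative on the subgroup `P`. -/
def HomOn {W D : Type*} [Group W] [Group D] (P : Subgroup W) (p : W → D) : Prop :=
  ∀ g ∈ P, ∀ h ∈ P, p (g * h) = p g * p h

section HomOn
variable {D : Type*} [Group D] {P : Subgroup W} {p : W → D}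

lemma HomOn.one (h : HomOn P p) : p 1 = 1 := by
  have := h 1 (one_mem _) 1 (one_mem _)
  simpa using this

lemma HomOn.pow (h : HomOn P p) {g : W} (hg : g ∈ P) (k : ℕ) : p (g ^ k) = p g ^ k := by
  induction k with
  | zero => simpa using h.one
  | succ k ih => rw [pow_succ, h _ (pow_mem hg k) _ hg, ih, pow_succ]

lemma HomOn.inv (h : HomOn P p) {g : W} (hg : g ∈ P) : p g⁻¹ = (p g)⁻¹ := by
  have := h _ (inv_mem hg) _ hg
  rw [inv_mul_cancel, h.one] at this
  exact eq_inv_of_mul_eq_one_left this.symm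

end HomOn

/-- The homomorphism from the dihedral group of order `2 M a b` to `W` with
`sr 0 ↦ a` and `sr 1 ↦ b`. -/
def dih (cs : CoxeterSystem M W) (a b : B) [NeZero (M a b)] : DihedralGroup (M a b) →* W where
  toFun
    | .r i => (cs.simple a * cs.simple b) ^ i.val
    | .sr i => cs.simple a * (cs.simple a * cs.simple b) ^ i.val
  map_one' := by
    change (cs.simple a * cs.simple b) ^ (0 : ZMod (M a b)).val = 1
    simp
  map_mul' := by
    have hp := cs.simple_mul_simple_pow a b
    set x := cs.simple a * cs.simple b with hx
    have hadd : ∀ i j : ZMod (M a b), x ^ (i + j).val = x ^ i.val * x ^ j.val := by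
      intro i j
      rw [ZMod.val_add, ← pow_eq_pow_mod _ hp, pow_add]
    have hax : cs.simple a * x * (cs.simple a)⁻¹ = x⁻¹ := by simp [hx]
    have hflip : ∀ i : ZMod (M a b), x ^ i.val * cs.simple a * x ^ i.val = cs.simple a := by
      intro i
      have h1 : cs.simple a * x ^ i.val * (cs.simple a)⁻¹ = (x ^ i.val)⁻¹ := by
        rw [← conj_pow, hax, inv_pow]
      rw [mul_assoc, mul_inv_eq_iff_eq_mul.mp h1]
      simp
    have hsub : ∀ i j : ZMod (M a b), x ^ i.val * x ^ (j - i).val = x ^ j.val := by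
      intro i j
      rw [← hadd]; congr 2; ring
    rintro (i | i) (j | j)
    · exact hadd i j
    · change cs.simple a * x ^ (j - i).val = x ^ i.val * (cs.simple a * x ^ j.val)
      rw [← hsub i j]
      conv_lhs => rw [← hflip i]
      simp only [mul_assoc]
    · change cs.simple a * x ^ (i + j).val = cs.simple a * x ^ i.val * x ^ j.val
      rw [hadd, mul_assoc]
    · change x ^ (j - i).val = cs.simple a * x ^ i.val * (cs.simple a * x ^ j.val)
      rw [← hsub i j]
      have h2 : cs.simple a * x ^ i.val * (cs.simple a * (x ^ i.val * x ^ (j - i).val)) =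
        cs.simple a * (x ^ i.val * cs.simple a * x ^ i.val) * x ^ (j - i).val := by group
      rw [h2, hflip]
      simp

lemma dih_injective {a b : B} [NeZero (M a b)] : Function.Injective (dih cs a b) := by
  rw [injective_iff_map_eq_one]
  rintro (i | i) h
  · change (cs.simple a * cs.simple b) ^ i.val = 1 at h
    have h1 := dvd_of_pow_eq_one (NeZero.ne _) h
    have h2 := Nat.eq_zero_of_dvd_of_lt h1 (ZMod.val_lt i)
    rw [(ZMod.val_eq_zero i).mp h2]; rfl
  · change cs.simple a * (cs.simple a * cs.simple b) ^ i.val = 1 at h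
    have h1 := congrArg cs.lengthParity h
    simp only [map_mul, map_pow, lengthParity_simple, map_one] at h1
    have h2 : Multiplicative.ofAdd (1 : ZMod 2) * Multiplicative.ofAdd (1 : ZMod 2) = 1 := by
      decide
    rw [h2, one_pow, mul_one] at h1
    exact absurd h1 (by decide)

lemma dih_mem {a b : B} [NeZero (M a b)] (H : Subgroup W) (ha : cs.simple a ∈ H)
    (hb : cs.simple b ∈ H) (d : DihedralGroup (M a b)) : dih cs a b d ∈ H := by
  rcases d with i | i
  · exact pow_mem (mul_mem ha hb) _
  · exact mul_mem ha (pow_mem (mul_mem ha hb) _)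

/-- If every generator in `T` other than `a, b` commutes with `a` and `b`, then the parabolic
subgroup of `T` is the direct product of `⟨a, b⟩` with the parabolic subgroup of `T ∖ {a, b}`;
the map `p` is the projection to the first factor. -/
lemma exists_proj {T : Set B} {a b : B} (ha : a ∈ T) (hb : b ∈ T) (hne : a ≠ b)
    (hn : M a b ≠ 0) (hiso : ∀ c ∈ T, c ≠ a → c ≠ b → M c a = 2 ∧ M c b = 2) :
    ∃ p : W → DihedralGroup (M a b), HomOn (par cs T) p ∧
      p (cs.simple a) = .sr 0 ∧ p (cs.simple b) = .sr 1 ∧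
      (∀ c ∈ T, c ≠ a → c ≠ b → p (cs.simple c) = 1) ∧
      ∀ g ∈ par cs T, p g = 1 → g ∈ par cs (T \ {a, b}) := by
  classical
  have : NeZero (M a b) := ⟨hn⟩
  have hn1 := M.off_diagonal a b hne
  have : Fact (1 < M a b) := ⟨by omega⟩
  have hcomm : ∀ d, ∀ q ∈ par cs (T \ {a, b}), dih cs a b d * q = q * dih cs a b d := by
    have hcen : par cs (T \ {a, b}) ≤ Subgroup.centralizer {cs.simple a, cs.simple b} := by
      rw [par, Subgroup.closure_le]
      rintro _ ⟨c, hc, rfl⟩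
      have hc' : c ≠ a ∧ c ≠ b := by simpa using hc.2
      obtain ⟨h1, h2⟩ := hiso c hc.1 hc'.1 hc'.2
      rw [SetLike.mem_coe, Subgroup.mem_centralizer_iff]
      rintro _ (rfl | rfl)
      · exact (simple_comm h1).symm
      · exact (simple_comm h2).symm
    intro d q hq
    have h1 := dih_mem (cs := cs) (a := a) (b := b)
      (Subgroup.centralizer {q})
      (by rw [Subgroup.mem_centralizer_iff]; rintro _ rfl
          exact ((Subgroup.mem_centralizer_iff.mp (hcen hq)) _ (by simp)).symm)
      (by rw [Subgroup.mem_centralizer_iff]; rintro _ rfl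
          exact ((Subgroup.mem_centralizer_iff.mp (hcen hq)) _ (by simp)).symm) d
    exact ((Subgroup.mem_centralizer_iff.mp h1) q rfl).symm
  let R : W → DihedralGroup (M a b) → Prop := fun g d => (dih cs a b d)⁻¹ * g ∈ par cs (T \ {a, b})
  have hR1 : R 1 1 := by simp [R]
  have hRm : ∀ g d g' d', R g d → R g' d' → R (g * g') (d * d') := by
    intro g d g' d' h h'
    have e : (dih cs a b (d * d'))⁻¹ * (g * g') =
        ((dih cs a b d)⁻¹ * g) * ((dih cs a b d')⁻¹ * g') := by
      have := hcomm d' _ h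
      calc _ = (dih cs a b d')⁻¹ * (((dih cs a b d)⁻¹ * g)) * g' := by rw [map_mul]; group
        _ = (dih cs a b d')⁻¹ * (((dih cs a b d)⁻¹ * g) * dih cs a b d') *
            ((dih cs a b d')⁻¹ * g') := by group
        _ = _ := by rw [← this]; group
    change _ ∈ _
    rw [e]; exact mul_mem h h'
  have hRi : ∀ g d, R g d → R g⁻¹ d⁻¹ := by
    intro g d h
    have := hcomm d _ (inv_mem h)
    change _ ∈ _
    rw [map_inv, inv_inv]
    convert inv_mem h using 1
    rw [mul_inv_rev, inv_inv] at this ⊢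
    rw [← mul_assoc] at this
    exact mul_right_cancel this
  have hRu : ∀ g d d', R g d → R g d' → d = d' := by
    intro g d d' h h'
    apply dih_injective (cs := cs)
    have h1 : (dih cs a b d)⁻¹ * dih cs a b d' ∈ par cs (T \ {a, b}) := by
      have := mul_mem h (inv_mem h')
      convert this using 1
      group
    have h2 : (dih cs a b d)⁻¹ * dih cs a b d' ∈ par cs {a, b} := by
      rw [← map_inv, ← map_mul]
      exact dih_mem _ (simple_mem_par (by simp)) (simple_mem_par (by simp)) _
    have h3 := par_inter h1 h2
    rw [Set.sdiff_inter_self] at h3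
    simp only [par, Set.image_empty, Subgroup.closure_empty, Subgroup.mem_bot] at h3
    exact (inv_mul_eq_one.mp h3)
  have hRa : R (cs.simple a) (.sr 0) := by
    have : dih cs a b (.sr 0) = cs.simple a := by
      change cs.simple a * (cs.simple a * cs.simple b) ^ (0 : ZMod (M a b)).val = _
      simp
    simp [R, this]
  have hRb : R (cs.simple b) (.sr 1) := by
    have : dih cs a b (.sr 1) = cs.simple b := by
      change cs.simple a * (cs.simple a * cs.simple b) ^ (1 : ZMod (M a b)).val = _
      rw [ZMod.val_one]; simp
    simp [R, this]
  have hRc : ∀ c ∈ T, c ≠ a → c ≠ b → R (cs.simple c) 1 := by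
    intro c hc h1 h2
    have : c ∈ T \ {a, b} := ⟨hc, by simp [h1, h2]⟩
    simpa [R] using simple_mem_par this
  have hex : ∀ g ∈ par cs T, ∃ d, R g d := by
    intro g hg
    induction hg using Subgroup.closure_induction with
    | mem x hx =>
      obtain ⟨c, hc, rfl⟩ := hx
      by_cases h1 : c = a
      · subst h1; exact ⟨_, hRa⟩
      by_cases h2 : c = b
      · subst h2; exact ⟨_, hRb⟩
      exact ⟨_, hRc c hc h1 h2⟩
    | one => exact ⟨1, hR1⟩
    | mul x y _ _ hx hy =>
      obtain ⟨d, hd⟩ := hx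
      obtain ⟨d', hd'⟩ := hy
      exact ⟨_, hRm _ _ _ _ hd hd'⟩
    | inv x _ hx =>
      obtain ⟨d, hd⟩ := hx
      exact ⟨_, hRi _ _ hd⟩
  let p : W → DihedralGroup (M a b) := fun g => if h : ∃ d, R g d then h.choose else 1
  have hp : ∀ g d, R g d → p g = d := by
    intro g d h
    have hE : ∃ d, R g d := ⟨d, h⟩
    have : p g = hE.choose := dif_pos hE
    rw [this]
    exact hRu _ _ _ hE.choose_spec h
  refine ⟨p, ?_, hp _ _ hRa, hp _ _ hRb, fun c h h1 h2 => hp _ _ (hRc c h h1 h2), ?_⟩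
  · intro g hg h hh
    obtain ⟨d, hd⟩ := hex g hg
    obtain ⟨d', hd'⟩ := hex h hh
    rw [hp _ _ hd, hp _ _ hd', hp _ _ (hRm _ _ _ _ hd hd')]
  · intro g hg h
    obtain ⟨d, hd⟩ := hex g hg
    rw [hp _ _ hd] at h
    subst h
    simpa [R] using hd

end Dih

/-! ### Congruences in `ZMod n` -/

section Arith
variable {n : ℕ}

lemma castHom_eq_zero_of_dvd (h : 2 ∣ n) {k : ℕ} (hk : 2 ∣ k) :
    ZMod.castHom h (ZMod 2) (k : ZMod n) = 0 := by
  rw [map_natCast]; exact (ZMod.natCast_eq_zero_iff _ _).mpr hk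

lemma exists_natCast [NeZero n] (x : ZMod n) : ∃ k : ℕ, x = k := ⟨x.val, by simp⟩

lemma castHom_eq_zero_of_four [NeZero n] (h : 2 ∣ n) (h4 : 4 ∣ n) {m : ℕ} (hm : m % 4 = 2)
    {x : ZMod n} (hx : (m : ZMod n) * x = 0) : ZMod.castHom h (ZMod 2) x = 0 := by
  obtain ⟨k, rfl⟩ := exists_natCast x
  apply castHom_eq_zero_of_dvd
  rw [← Nat.cast_mul, ZMod.natCast_eq_zero_iff] at hx
  obtain ⟨q, hq⟩ : ∃ q, m = 4 * q + 2 := ⟨m / 4, by omega⟩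
  have h1 : 4 ∣ m * k := h4.trans hx
  have h2 : m * k = 4 * (q * k) + 2 * k := by rw [hq]; ring
  omega

lemma castHom_eq_zero_of_odd [NeZero n] (h : 2 ∣ n) {m : ℕ} (hm : Odd m)
    {x : ZMod n} (hx : (m : ZMod n) * x = 0) : ZMod.castHom h (ZMod 2) x = 0 := by
  obtain ⟨k, rfl⟩ := exists_natCast x
  apply castHom_eq_zero_of_dvd
  rw [← Nat.cast_mul, ZMod.natCast_eq_zero_iff] at hx
  obtain ⟨q, hq⟩ := hm
  have h1 : 2 ∣ m * k := h.trans hx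
  have h2 : m * k = 2 * (q * k) + k := by rw [hq]; ring
  omega

lemma two_mul_eq_zero_of_four [NeZero n] (h : n % 4 = 2) {x : ZMod n} (hx : 4 * x = 0) :
    2 * x = 0 := by
  obtain ⟨k, rfl⟩ := exists_natCast x
  have e4 : (4 : ZMod n) * (k : ZMod n) = ((4 * k : ℕ) : ZMod n) := by push_cast; ring
  have e2 : (2 : ZMod n) * (k : ZMod n) = ((2 * k : ℕ) : ZMod n) := by push_cast; ring
  rw [e4, ZMod.natCast_eq_zero_iff] at hx
  rw [e2, ZMod.natCast_eq_zero_iff]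
  obtain ⟨q, hq⟩ : ∃ q, n = 2 * (2 * q + 1) := ⟨n / 4, by omega⟩
  rw [hq] at hx ⊢
  have h1 : (2 * q + 1) ∣ 2 * k := by
    apply Nat.dvd_of_mul_dvd_mul_left (k := 2) (by norm_num)
    convert hx using 1; ring
  have h2 : Nat.Coprime (2 * q + 1) 2 := by simp
  exact mul_dvd_mul_left 2 (h2.dvd_of_dvd_mul_left h1)

lemma eq_zero_of_odd {m : ℕ} (hm : Odd m) {x : ZMod n} (hx : (m : ZMod n) * x = 0)
    (h2 : 2 * x = 0) : x = 0 := by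
  obtain ⟨q, rfl⟩ := hm
  push_cast at hx
  linear_combination hx - (q : ZMod n) * h2

end Arith

/-- A half of the condition on a special pair: every generator other than `v, v'` which generates
with `v` a finite subgroup commutes with both `v` and `v'`. -/
def HalfSpecial {B : Type*} (M : CoxeterMatrix B) (v v' : B) : Prop :=
  ∀ s, s ≠ v → s ≠ v' → M s v ≠ 0 → M s v = 2 ∧ M s v' = 2

section Kill
variable {B B' : Type*} {M : CoxeterMatrix B} {M' : CoxeterMatrix B'}
  {cs : CoxeterSystem M W} {cs' : CoxeterSystem M' W}

/-! ### Comparison of two systems of Coxeter generators -/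

/-- Maximal finite parabolic subgroups of two Coxeter systems of `W` agree up to conjugation,
since they are the maximal finite subgroups. -/
lemma transfer [Finite B] [Finite B'] {T' : Set B'} (hT' : MaxSph cs' T') :
    ∃ (x : W) (T : Set B), MaxSph cs T ∧
      ∀ g, g ∈ par cs' T' ↔ x⁻¹ * g * x ∈ par cs T := by
  have := hT'.1
  obtain ⟨x, J, hJ, hx⟩ := finite_le_conj_par (cs := cs) (par cs' T')
  obtain ⟨T, hJT, hT⟩ := exists_maxSph hJ
  refine ⟨x, T, hT, fun g => ⟨fun hg => par_mono hJT (hx g hg), fun hg => ?_⟩⟩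
  have hfin := hT.1
  let H : Subgroup W := (par cs T).map (MulAut.conj x).toMonoidHom
  have hH : ∀ g, g ∈ H ↔ x⁻¹ * g * x ∈ par cs T := by
    intro g
    constructor
    · rintro ⟨h, hh, rfl⟩
      simpa [mul_assoc] using hh
    · intro h
      exact ⟨_, h, by simp [mul_assoc]⟩
  have : Finite H := by
    change Finite ((par cs T).map (MulAut.conj x).toMonoidHom : Set W)
    exact ((Set.toFinite (par cs T : Set W)).image _).to_subtype
  exact hT'.maximal H (fun g hg => (hH g).mpr (par_mono hJT (hx g hg))) ((hH g).mpr hg)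

/-- Two Coxeter systems `cs, cs'` of `W` with a common finite parabolic subgroup, generated by `T`
and `T'` respectively, and a pair `a, b ∈ T'` that is not special and generates a dihedral direct
factor of it of order `2 M' a b` divisible by `4` and at least `8`; `p` is the projection to
this factor. -/
structure Factor (cs : CoxeterSystem M W) (cs' : CoxeterSystem M' W) (T : Set B) (T' : Set B')
    (a b : B') (p : W → DihedralGroup (M' a b)) : Prop where
  fin : Finite (par cs T)
  eq : par cs T = par cs' T'
  ha : a ∈ T'
  hb : b ∈ T'
  even : 2 ∣ M' a b
  four : 4 ≤ M' a b
  nonspecial : M' a b % 4 = 2 → ¬ HalfSpecial M' a b ∧ ¬ HalfSpecial M' b a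
  hom : HomOn (par cs T) p
  pa : p (cs'.simple a) = .sr 0
  pb : p (cs'.simple b) = .sr 1
  pc : ∀ c ∈ T', c ≠ a → c ≠ b → p (cs'.simple c) = 1

namespace Factor
variable {T : Set B} {T' : Set B'} {a b : B'} {p : W → DihedralGroup (M' a b)}

lemma neZero (F : Factor cs cs' T T' a b p) : NeZero (M' a b) := ⟨by have := F.four; omega⟩

lemma rel (F : Factor cs cs' T T' a b p) {s t : B} (hs : s ∈ T) (ht : t ∈ T)
    {i j : ZMod (M' a b)} (hi : p (cs.simple s) = .sr i) (hj : p (cs.simple t) = .sr j) :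
    (M s t : ZMod (M' a b)) * (j - i) = 0 := by
  have h1 := congrArg p (cs.simple_mul_simple_pow s t)
  rw [F.hom.pow (mul_mem (simple_mem_par hs) (simple_mem_par ht)),
    F.hom _ (simple_mem_par hs) _ (simple_mem_par ht), hi, hj, DihedralGroup.sr_mul_sr,
    DihedralGroup.r_pow, F.hom.one, DihedralGroup.one_def] at h1
  have := DihedralGroup.r.inj h1
  rw [← this]; ring

lemma rel_r (F : Factor cs cs' T T' a b p) {s : B} (hs : s ∈ T)
    {i : ZMod (M' a b)} (hi : p (cs.simple s) = .r i) : 2 * i = 0 := by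
  have h1 := congrArg p (cs.simple_mul_simple_self s)
  rw [F.hom _ (simple_mem_par hs) _ (simple_mem_par hs), hi, DihedralGroup.r_mul_r,
    F.hom.one, DihedralGroup.one_def] at h1
  have := DihedralGroup.r.inj h1
  rw [← this]; ring

/-- The intersection of two maximal finite parabolic subgroups detecting that a half of the
condition on a special pair fails: it meets the dihedral factor in the subgroup generated by a
single reflection. -/
lemma exists_wall_aux [Finite B] [Finite B'] (F : Factor cs cs' T T' a b p) {v v' : B'}
    (hv : v ∈ T') (h6 : 6 ≤ M' v v') {κ : ZMod (M' a b)} (hκ : p (cs'.simple v) = .sr κ)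
    (hc : ∀ c ∈ T', c ≠ v → c ≠ v' → p (cs'.simple c) = 1) (hns : ¬ HalfSpecial M' v v') :
    ∃ (x : W) (T₂ K : Set B) (k : ZMod (M' a b)) (u : B), MaxSph cs T₂ ∧
      (∀ g, (g ∈ par cs T ∧ x⁻¹ * g * x ∈ par cs T₂) ↔ g ∈ par cs K) ∧
      (∀ g ∈ par cs K, p g = 1 ∨ p g = .sr k) ∧
      u ∈ K ∧ p (cs.simple u) = .sr k ∧
      ZMod.castHom F.even (ZMod 2) k = ZMod.castHom F.even (ZMod 2) κ := by
  have hvv : v ≠ v' := by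
    rintro rfl; rw [M'.diagonal] at h6; omega
  simp only [HalfSpecial, not_forall] at hns
  obtain ⟨c, hcv, hcv', h0, hn2⟩ := hns
  obtain ⟨T₂', hsub, hT₂'⟩ := exists_maxSph (par_pair_finite (cs := cs') h0)
  have hcT : c ∈ T₂' := hsub (by simp)
  have hvT : v ∈ T₂' := hsub (by simp)
  have hv'T : v' ∉ T₂' := by
    intro hv'T
    have e1 := sph_ne_zero hT₂'.1 hcT hvT
    have e2 := sph_ne_zero hT₂'.1 hcT hv'T
    have o1 := M'.off_diagonal c v hcv
    have o2 := M'.off_diagonal c v' hcv'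
    by_cases h3 : 3 ≤ M' c v
    · exact no_three_six hT₂'.1 hcT hvT hv'T hcv' h3 h6
    · have h3' : 3 ≤ M' c v' := by
        by_contra h
        exact hn2 ⟨by omega, by omega⟩
      exact no_three_six hT₂'.1 hcT hv'T hvT hcv h3' (by rw [M'.symmetric]; exact h6)
  have hI : ∀ g ∈ par cs' (T' ∩ T₂'), p g = 1 ∨ p g = .sr κ := by
    intro g hg
    induction hg using Subgroup.closure_induction with
    | mem y hy =>
      obtain ⟨e, he, rfl⟩ := hy
      by_cases h1 : e = v
      · subst h1; exact Or.inr hκ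
      · exact Or.inl (hc e he.1 h1 (fun h => hv'T (h ▸ he.2)))
    | one => exact Or.inl F.hom.one
    | mul y z hy hz iy iz =>
      rw [F.hom y (F.eq ▸ par_mono Set.inter_subset_left hy) z
        (F.eq ▸ par_mono Set.inter_subset_left hz)]
      rcases iy with h | h <;> rcases iz with h' | h' <;> simp [h, h']
    | inv y hy iy =>
      rw [F.hom.inv (F.eq ▸ par_mono Set.inter_subset_left hy)]
      rcases iy with h | h <;> simp [h]
  obtain ⟨x, T₂, hT₂, hx⟩ := transfer (cs := cs) hT₂'
  obtain ⟨w, hw, K, hK, hwK⟩ := par_inter_conj (cs := cs) T T₂ x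
  have hback : ∀ g, g ∈ par cs K → w * g * w⁻¹ ∈ par cs' (T' ∩ T₂') := by
    intro g hg
    have := (hwK (w * g * w⁻¹)).mpr (by simpa [mul_assoc] using hg)
    exact par_inter (F.eq ▸ this.1) ((hx _).mpr this.2)
  obtain ⟨k, hk, hck⟩ : ∃ k, (p w)⁻¹ * .sr κ * p w = .sr k ∧
      ZMod.castHom F.even (ZMod 2) k = ZMod.castHom F.even (ZMod 2) κ := by
    have h2 : ∀ y : ZMod 2, y + y = 0 := by decide
    have h3 : ∀ y : ZMod 2, -y = y := by decide
    rcases p w with i | i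
    · refine ⟨κ + i + i, by simp, ?_⟩
      rw [map_add, map_add, add_assoc, h2, add_zero]
    · refine ⟨i - (κ - i), by simp, ?_⟩
      rw [map_sub, map_sub, sub_eq_add_neg, h3, sub_eq_add_neg, h3, add_comm, add_assoc, h2,
        add_zero]
  have hwi := inv_mem hw
  have hconj : ∀ h ∈ par cs T, p (w⁻¹ * h * w) = (p w)⁻¹ * p h * p w := by
    intro h hh
    rw [F.hom _ (mul_mem hwi hh) _ hw, F.hom _ hwi _ hh, F.hom.inv hw]
  have hKp : ∀ g ∈ par cs K, p g = 1 ∨ p g = .sr k := by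
    intro g hg
    have h1 := hI _ (hback g hg)
    have h2 := hconj (w * g * w⁻¹) (mul_mem (mul_mem hw (par_mono hK hg)) hwi)
    have h3 : w⁻¹ * (w * g * w⁻¹) * w = g := by group
    rw [h3] at h2
    rcases h1 with h | h
    · left; rw [h2, h]; simp
    · right; rw [h2, h, hk]
  have hvK : w⁻¹ * cs'.simple v * w ∈ par cs K := by
    apply (hwK _).mp
    refine ⟨F.eq ▸ simple_mem_par hv, (hx _).mp (simple_mem_par hvT)⟩
  have hpv : p (w⁻¹ * cs'.simple v * w) = .sr k := by
    rw [hconj _ (F.eq ▸ simple_mem_par hv), hκ, hk]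
  obtain ⟨u, hu, hpu⟩ : ∃ u ∈ K, p (cs.simple u) = .sr k := by
    by_contra! hcon
    have : ∀ g ∈ par cs K, p g = 1 := by
      intro g hg
      induction hg using Subgroup.closure_induction with
      | mem y hy =>
        obtain ⟨e, he, rfl⟩ := hy
        exact (hKp _ (simple_mem_par he)).resolve_right (hcon e he)
      | one => exact F.hom.one
      | mul y z hy hz iy iz =>
        rw [F.hom y (par_mono hK hy) z (par_mono hK hz), iy, iz, one_mul]
      | inv y hy iy => rw [F.hom.inv (par_mono hK hy), iy, inv_one]
    have h1 := this _ hvK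
    rw [hpv, DihedralGroup.one_def] at h1
    cases h1
  refine ⟨w⁻¹ * x, T₂, K, k, u, hT₂, fun g => ?_, hKp, hu, hpu, hck⟩
  have h1 := hwK (w * g * w⁻¹)
  have e1 : w⁻¹ * (w * g * w⁻¹) * w = g := by group
  have e2 : x⁻¹ * (w * g * w⁻¹) * x = (w⁻¹ * x)⁻¹ * g * (w⁻¹ * x) := by group
  rw [e1, e2] at h1
  rw [← h1]
  refine and_congr_left fun _ => ⟨fun h => mul_mem (mul_mem hw h) hwi, fun h => ?_⟩
  have := mul_mem (mul_mem hwi h) hw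
  rwa [e1] at this

lemma exists_wall [Finite B] [Finite B'] (F : Factor cs cs' T T' a b p) (h2 : M' a b % 4 = 2)
    (ε : ZMod 2) :
    ∃ (x : W) (T₂ K : Set B) (k : ZMod (M' a b)) (u : B), MaxSph cs T₂ ∧
      (∀ g, (g ∈ par cs T ∧ x⁻¹ * g * x ∈ par cs T₂) ↔ g ∈ par cs K) ∧
      (∀ g ∈ par cs K, p g = 1 ∨ p g = .sr k) ∧
      u ∈ K ∧ p (cs.simple u) = .sr k ∧ ZMod.castHom F.even (ZMod 2) k = ε := by
  have h4 := F.four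
  obtain ⟨h3, h3'⟩ := F.nonspecial h2
  have hε : ε = 0 ∨ ε = 1 := by revert ε; decide
  rcases hε with rfl | rfl
  · have := F.exists_wall_aux F.ha (by omega) F.pa F.pc h3
    simpa only [map_zero] using this
  · have := F.exists_wall_aux F.hb (by rw [M'.symmetric]; omega) F.pb
      (fun c hc h1 h2 => F.pc c hc h2 h1) h3'
    simpa only [map_one] using this

/-- The images in the dihedral factor of the generators in `T` include reflections of both
types. -/
lemma exists_parity [Finite B] [Finite B'] (F : Factor cs cs' T T' a b p) (ε : ZMod 2) :
    ∃ u ∈ T, ∃ k, p (cs.simple u) = .sr k ∧ ZMod.castHom F.even (ZMod 2) k = ε := by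
  have := F.neZero
  have heven := F.even
  by_cases h2 : M' a b % 4 = 2
  · obtain ⟨x, T₂, K, k, u, -, h, -, hu, hpu, hk⟩ := F.exists_wall h2 ε
    exact ⟨u, simple_mem_par_iff.mp ((h _).mpr (simple_mem_par hu)).1, k, hpu, hk⟩
  have h4 : 4 ∣ M' a b := by omega
  by_contra! hcon
  set c := ZMod.castHom F.even (ZMod 2)
  -- Otherwise the image lies in the subgroup of index two consisting of the rotations `r i`
  -- with `i` even and one class of reflections.
  let Good : DihedralGroup (M' a b) → Prop := fun d =>
    (∀ i, d = .r i → c i = 0) ∧ ∀ i, d = .sr i → c i = ε + 1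
  have hgr : ∀ i, Good (.r i) ↔ c i = 0 := fun i =>
    ⟨fun h => h.1 i rfl, fun h => ⟨fun j hj => by cases hj; exact h, fun j hj => by cases hj⟩⟩
  have hgs : ∀ i, Good (.sr i) ↔ c i = ε + 1 := fun i =>
    ⟨fun h => h.2 i rfl, fun h => ⟨fun j hj => (by cases hj), fun j hj => by cases hj; exact h⟩⟩
  clear_value Good
  have hε : ∀ y z : ZMod 2, y ≠ z → y = z + 1 := by decide
  have hgood : ∀ g ∈ par cs T, Good (p g) := by
    have hmul : ∀ d d', Good d → Good d' → Good (d * d') := by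
      rintro (i | i) (j | j) h h'
      · rw [hgr] at h h'
        rw [DihedralGroup.r_mul_r, hgr, map_add, h, h', add_zero]
      · rw [hgr] at h
        rw [hgs] at h'
        rw [DihedralGroup.r_mul_sr, hgs, map_sub, h, h', sub_zero]
      · rw [hgs] at h
        rw [hgr] at h'
        rw [DihedralGroup.sr_mul_r, hgs, map_add, h, h', add_zero]
      · rw [hgs] at h h'
        rw [DihedralGroup.sr_mul_sr, hgr, map_sub, h, h', sub_self]
    have hinv : ∀ d, Good d → Good d⁻¹ := by
      rintro (i | i) h
      · rw [hgr] at h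
        rw [DihedralGroup.inv_r, hgr, map_neg, h, neg_zero]
      · rwa [DihedralGroup.inv_sr]
    intro g hg
    induction hg using Subgroup.closure_induction with
    | mem y hy =>
      obtain ⟨u, hu, rfl⟩ := hy
      rcases hpu : p (cs.simple u) with i | i
      · rw [hgr]
        exact castHom_eq_zero_of_four F.even h4 (m := 2) rfl
          (by exact_mod_cast F.rel_r hu hpu)
      · rw [hgs]
        exact hε _ _ (hcon u hu i hpu)
    | one => rw [F.hom.one, DihedralGroup.one_def, hgr]; exact map_zero c
    | mul y z hy hz iy iz => rw [F.hom y hy z hz]; exact hmul _ _ iy iz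
    | inv y hy iy => rw [F.hom.inv hy]; exact hinv _ iy
  have ha := hgood (cs'.simple a) (by rw [F.eq]; exact simple_mem_par F.ha)
  have hb := hgood (cs'.simple b) (by rw [F.eq]; exact simple_mem_par F.hb)
  rw [F.pa, hgs] at ha
  rw [F.pb, hgs] at hb
  rw [← ha, map_zero, map_one] at hb
  exact absurd hb (by decide)

lemma kill_aux (F : Factor cs cs' T T' a b p) {s t u : B} (hs : s ∈ T) (ht : t ∈ T)
    (hu : u ∈ T) {i j k : ZMod (M' a b)} (hi : p (cs.simple s) = .sr i)
    (hj : p (cs.simple t) = .sr j) (hk : p (cs.simple u) = .sr k) (hsu : s ≠ u)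
    (h3 : 3 ≤ M s t) (hij : 2 * (j - i) ≠ 0) (hus : M u s = 2) (hev : Even (M u t))
    (hki : ZMod.castHom F.even (ZMod 2) (i - k) ≠ 0) (hut : 3 ≤ M u t) : False := by
  have := F.neZero
  have heven := F.even
  have r1 := F.rel hu hs hk hi
  rw [hus] at r1
  by_cases h4 : 4 ∣ M' a b
  · exact hki (castHom_eq_zero_of_four F.even h4 rfl r1)
  have h2 : M' a b % 4 = 2 := by omega
  obtain ⟨q, hq⟩ := hev
  by_cases hq4 : M u t = 4
  · have r2 := F.rel hu ht hk hj
    rw [hq4] at r2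
    have r3 := two_mul_eq_zero_of_four h2 (by exact_mod_cast r2)
    apply hij
    push_cast at r1
    linear_combination r3 - r1
  · exact no_three_six F.fin hs ht hu hsu h3 (by rw [M.symmetric]; omega)

/-- A product of two generators of odd order lies in the kernel of the projection to the
dihedral factor. -/
lemma kill_odd [Finite B] [Finite B'] (F : Factor cs cs' T T' a b p) {s t : B} (hs : s ∈ T)
    (ht : t ∈ T) (hodd : Odd (M s t)) : p (cs.simple s * cs.simple t) = 1 := by
  have := F.neZero
  have hmul := F.hom _ (simple_mem_par hs) _ (simple_mem_par ht)
  have hpow : (p (cs.simple s) * p (cs.simple t)) ^ M s t = 1 := by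
    rw [← hmul, ← F.hom.pow (mul_mem (simple_mem_par hs) (simple_mem_par ht)),
      cs.simple_mul_simple_pow, F.hom.one]
  have hsr : ∀ l : ZMod (M' a b), (DihedralGroup.sr l) ^ M s t ≠ 1 := by
    intro l h
    obtain ⟨q, hq⟩ := hodd
    rw [hq, pow_succ, pow_mul, pow_two, DihedralGroup.sr_mul_self, one_pow, one_mul,
      DihedralGroup.one_def] at h
    cases h
  rw [hmul]
  rcases hi : p (cs.simple s) with i | i <;> rcases hj : p (cs.simple t) with j | j
  · rw [hi, hj, DihedralGroup.r_mul_r, DihedralGroup.r_pow, DihedralGroup.one_def] at hpow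
    have h1 := DihedralGroup.r.inj hpow
    rw [DihedralGroup.r_mul_r, DihedralGroup.one_def, eq_zero_of_odd hodd (x := i + j)]
    · rw [← h1]; ring
    · linear_combination F.rel_r hs hi + F.rel_r ht hj
  · rw [hi, hj, DihedralGroup.r_mul_sr] at hpow
    exact absurd hpow (hsr _)
  · rw [hi, hj, DihedralGroup.sr_mul_r] at hpow
    exact absurd hpow (hsr _)
  · have r1 := F.rel hs ht hi hj
    by_cases hij : 2 * (j - i) = 0
    · rw [DihedralGroup.sr_mul_sr, eq_zero_of_odd hodd r1 hij, DihedralGroup.one_def]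
    exfalso
    have hne : s ≠ t := by
      rintro rfl
      rw [hi] at hj
      rw [DihedralGroup.sr.inj hj] at hij
      simp at hij
    have h3 : 3 ≤ M s t := by
      have := M.off_diagonal s t hne
      obtain ⟨q, hq⟩ := hodd
      omega
    have hc := castHom_eq_zero_of_odd F.even hodd r1
    rw [map_sub, sub_eq_zero] at hc
    obtain ⟨u, hu, k, hk, hck⟩ := F.exists_parity (ZMod.castHom F.even (ZMod 2) i + 1)
    have hz : ∀ y : ZMod 2, y - (y + 1) ≠ 0 := by decide
    have hki : ZMod.castHom F.even (ZMod 2) (i - k) ≠ 0 := by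
      rw [map_sub, hck]; exact hz _
    have hkj : ZMod.castHom F.even (ZMod 2) (j - k) ≠ 0 := by
      rw [map_sub, hck, hc]; exact hz _
    have hus : s ≠ u := by
      rintro rfl
      rw [hi] at hk
      rw [DihedralGroup.sr.inj hk] at hki
      simp at hki
    have hut : t ≠ u := by
      rintro rfl
      rw [hj] at hk
      rw [DihedralGroup.sr.inj hk] at hkj
      simp at hkj
    have rs := F.rel hu hs hk hi
    have rt := F.rel hu ht hk hj
    have es : Even (M u s) := by
      by_contra h
      exact hki (castHom_eq_zero_of_odd F.even (Nat.not_even_iff_odd.mp h) rs)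
    have et : Even (M u t) := by
      by_contra h
      exact hkj (castHom_eq_zero_of_odd F.even (Nat.not_even_iff_odd.mp h) rt)
    have zs := sph_ne_zero F.fin hu hs
    have zt := sph_ne_zero F.fin hu ht
    have os := M.off_diagonal u s hus.symm
    have ot := M.off_diagonal u t hut.symm
    by_cases h2s : M u s = 2 <;> by_cases h2t : M u t = 2
    · rw [h2s] at rs
      rw [h2t] at rt
      push_cast at rs rt
      exact hij (by linear_combination rt - rs)
    · exact F.kill_aux hs ht hu hi hj hk hus h3 hij h2s et hki (by omega)
    · exact F.kill_aux ht hs hu hj hi hk hut (by rw [M.symmetric]; exact h3)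
        (fun h => hij (by linear_combination -h)) h2t es hkj (by omega)
    · exact no_triangle F.fin hs ht hu h3 (by rw [M.symmetric]; omega)
        (by rw [M.symmetric]; omega)

/-- The element `(v v')²` of a special pair lies in the kernel of the projection to the
dihedral factor. -/
lemma kill_special [Finite B] [Finite B'] (F : Factor cs cs' T T' a b p) {v v' : B}
    (hv : v ∈ T) (hv' : v' ∈ T) (hne : v ≠ v') (hm : M v v' % 4 = 2)
    (hs : HalfSpecial M v v') : p ((cs.simple v * cs.simple v') ^ 2) = 1 := by
  have := F.neZero
  have heven := F.even
  have hpρ : p ((cs.simple v * cs.simple v') ^ 2) = (p (cs.simple v) * p (cs.simple v')) ^ 2 := by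
    rw [F.hom.pow (mul_mem (simple_mem_par hv) (simple_mem_par hv')),
      F.hom _ (simple_mem_par hv) _ (simple_mem_par hv')]
  rcases hi : p (cs.simple v) with i | i <;> rcases hj : p (cs.simple v') with j | j
  · rw [hpρ, hi, hj, DihedralGroup.r_mul_r, DihedralGroup.r_pow, DihedralGroup.one_def]
    congr 1
    push_cast
    linear_combination F.rel_r hv hi + F.rel_r hv' hj
  · rw [hpρ, hi, hj, DihedralGroup.r_mul_sr, pow_two, DihedralGroup.sr_mul_self]
  · rw [hpρ, hi, hj, DihedralGroup.sr_mul_r, pow_two, DihedralGroup.sr_mul_self]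
  rw [hi, hj, DihedralGroup.sr_mul_sr, DihedralGroup.r_pow] at hpρ
  by_contra hcon
  have hij : 2 * (j - i) ≠ 0 := by
    intro h
    apply hcon
    rw [hpρ, DihedralGroup.one_def]
    congr 1
    push_cast
    linear_combination h
  have honly : ∀ u ∈ T, ∀ k, p (cs.simple u) = .sr k → u = v ∨ u = v' := by
    intro u hu k hk
    by_contra! hn
    obtain ⟨h1, h2⟩ := hs u hn.1 hn.2 (sph_ne_zero F.fin hu hv)
    have r1 := F.rel hu hv hk hi
    have r2 := F.rel hu hv' hk hj
    rw [h1] at r1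
    rw [h2] at r2
    push_cast at r1 r2
    exact hij (by linear_combination r2 - r1)
  have hcj : ZMod.castHom F.even (ZMod 2) j ≠ ZMod.castHom F.even (ZMod 2) i := by
    obtain ⟨u, hu, k, hk, hck⟩ := F.exists_parity (ZMod.castHom F.even (ZMod 2) i + 1)
    have hz : ∀ y : ZMod 2, y + 1 ≠ y := by decide
    rcases honly u hu k hk with rfl | rfl
    · rw [hi] at hk
      rw [← DihedralGroup.sr.inj hk] at hck
      exact absurd hck.symm (hz _)
    · rw [hj] at hk
      rw [DihedralGroup.sr.inj hk, hck]
      exact hz _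
  by_cases h4 : 4 ∣ M' a b
  · have := castHom_eq_zero_of_four F.even h4 hm (F.rel hv hv' hi hj)
    rw [map_sub, sub_eq_zero] at this
    exact hcj this
  obtain ⟨x, T₂, K, k, u, hT₂, hK, hKp, hu, hpu, hck⟩ :=
    F.exists_wall (by omega) (ZMod.castHom F.even (ZMod 2) i)
  have huT := (hK _).mpr (simple_mem_par hu)
  have huv : u = v := by
    rcases honly u (simple_mem_par_iff.mp huT.1) k hpu with h | rfl
    · exact h
    · rw [hj] at hpu
      rw [DihedralGroup.sr.inj hpu, hck] at hcj
      exact absurd rfl hcj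
  subst huv
  have h1 := special_mem hne hm hs hT₂ huT.2
  have h2 := (hK _).mp ⟨pow_mem (mul_mem (simple_mem_par hv) (simple_mem_par hv')) 2, h1⟩
  rcases hKp _ h2 with h | h
  · exact hcon h
  · rw [hpρ] at h
    cases h

end Factor

end Kill

/-! ### Independence of the Coxeter generators -/

section Main
variable {B B' : Type*} {M : CoxeterMatrix B} {M' : CoxeterMatrix B'}

/-- The subgroup `N_e` of a Coxeter system with arbitrary index type. -/
def neIdx (cs : CoxeterSystem M W) : Subgroup W :=
  Subgroup.normalClosure
    ({x | ∃ s t, Odd (M s t) ∧ x = cs.simple s * cs.simple t} ∪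
     {x | ∃ v v', v ≠ v' ∧ M v v' % 4 = 2 ∧ HalfSpecial M v v' ∧
        x = (cs.simple v * cs.simple v') ^ 2})

instance (cs : CoxeterSystem M W) : (neIdx cs).Normal := Subgroup.normalClosure_normal

variable {cs : CoxeterSystem M W} {cs' : CoxeterSystem M' W}

lemma odd_mem_neIdx {s t : B} (h : Odd (M s t)) : cs.simple s * cs.simple t ∈ neIdx cs :=
  Subgroup.subset_normalClosure (Or.inl ⟨s, t, h, rfl⟩)

lemma special_mem_neIdx {v v' : B} (hne : v ≠ v') (hm : M v v' % 4 = 2)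
    (h : HalfSpecial M v v') : (cs.simple v * cs.simple v') ^ 2 ∈ neIdx cs :=
  Subgroup.subset_normalClosure (Or.inr ⟨v, v', hne, hm, h, rfl⟩)

lemma sq_mul_comm_mem {N : Subgroup W} {v v' : B}
    (h : (cs.simple v * cs.simple v') ^ 2 ∈ N) : (cs.simple v' * cs.simple v) ^ 2 ∈ N := by
  have := inv_mem h
  rw [← inv_pow, mul_inv_rev] at this
  simpa using this

/-- The pair `a, b` commutes with the rest of `T'`, generates a dihedral group of order divisible
by `4` and at least `8`, and is not special. -/
def BadPair (M' : CoxeterMatrix B') (T' : Set B') (a b : B') : Prop :=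
  a ∈ T' ∧ b ∈ T' ∧ a ≠ b ∧ (∀ c ∈ T', c ≠ a → c ≠ b → M' c a = 2 ∧ M' c b = 2) ∧
    2 ∣ M' a b ∧ 4 ≤ M' a b ∧ (M' a b % 4 = 2 → ¬ HalfSpecial M' a b ∧ ¬ HalfSpecial M' b a)

/-- The generators in `T'` that belong to no bad pair. -/
def goodPart (M' : CoxeterMatrix B') (T' : Set B') : Set B' :=
  {y | y ∈ T' ∧ ∀ a b, BadPair M' T' a b → y ≠ a ∧ y ≠ b}

lemma mem_goodPart [Finite B'] {T' : Set B'} {ρ : W} (hρ : ρ ∈ par cs' T')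
    (h : ∀ a b, BadPair M' T' a b → ρ ∈ par cs' (T' \ {a, b})) :
    ρ ∈ par cs' (goodPart M' T') := by
  have key : ∀ Q : Set (B' × B'), Q.Finite → (∀ q ∈ Q, BadPair M' T' q.1 q.2) →
      ρ ∈ par cs' (T' \ {y | ∃ q ∈ Q, y = q.1 ∨ y = q.2}) := by
    intro Q hQ
    induction Q, hQ using Set.Finite.induction_on with
    | empty => intro _; simpa using hρ
    | insert _ _ ih =>
      intro hq
      refine par_mono ?_ (par_inter (ih fun q hqs => hq q (Set.mem_insert_of_mem _ hqs))
        (h _ _ (hq _ (Set.mem_insert _ _))))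
      rintro y ⟨⟨h1, h2⟩, -, h3⟩
      refine ⟨h1, ?_⟩
      rintro ⟨q, hq | hq, h4⟩
      · subst hq; exact h3 h4
      · exact h2 ⟨q, hq, h4⟩
  refine par_mono ?_ (key {q | BadPair M' T' q.1 q.2} (Set.toFinite _) fun q hq => hq)
  rintro y ⟨h1, h2⟩
  exact ⟨h1, fun a b hab => ⟨fun e => h2 ⟨(a, b), hab, Or.inl e⟩,
    fun e => h2 ⟨(a, b), hab, Or.inr e⟩⟩⟩

/-- If `y, y'` have label at least `4` and `c` is joined to `y`, then `c` and `y` are identified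
modulo `N_e` while `c` commutes with `y'`. -/
lemma sq_mem_of_joined {T' : Set B'} (hT' : Finite (par cs' T')) {y y' c : B'} (hy : y ∈ T')
    (hy' : y' ∈ T') (hc : c ∈ T') (hcy' : c ≠ y') (h4 : 4 ≤ M' y y')
    (h3 : 3 ≤ M' c y) : (cs'.simple y * cs'.simple y') ^ 2 ∈ neIdx cs' := by
  have hM : M' c y = 3 := by
    by_contra h
    exact no_four_four hT' hc hy hy' hcy' (by omega) h4
  have hM2 : M' c y' = 2 := by
    have z := sph_ne_zero hT' hc hy'
    have o := M'.off_diagonal c y' hcy'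
    by_contra h
    exact no_triangle hT' hc hy hy' h3 (by omega) (by omega)
  have h1 : cs'.simple c * cs'.simple y ∈ neIdx cs' := odd_mem_neIdx (by rw [hM]; decide)
  rw [← QuotientGroup.eq_one_iff, QuotientGroup.mk_mul] at h1
  have h2 : (QuotientGroup.mk (cs'.simple y) : W ⧸ neIdx cs') = QuotientGroup.mk (cs'.simple c) := by
    have := eq_inv_of_mul_eq_one_right h1
    rw [this, ← QuotientGroup.mk_inv, cs'.inv_simple]
  rw [← QuotientGroup.eq_one_iff, QuotientGroup.mk_pow, QuotientGroup.mk_mul, h2,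
    ← QuotientGroup.mk_mul, ← QuotientGroup.mk_pow, pow_two]
  have h6 := cs'.simple_mul_simple_pow c y'
  rw [hM2, pow_two] at h6
  rw [h6, QuotientGroup.mk_one]

lemma sq_mem_of_goodPart {T' : Set B'} (hT' : Finite (par cs' T')) {y y' : B'}
    (hy : y ∈ goodPart M' T') (hy' : y' ∈ goodPart M' T') :
    (cs'.simple y * cs'.simple y') ^ 2 ∈ neIdx cs' := by
  by_cases hne : y = y'
  · subst hne; simp
  have z := sph_ne_zero hT' hy.1 hy'.1
  have o := M'.off_diagonal y y' hne
  by_cases hodd : Odd (M' y y')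
  · exact pow_mem (odd_mem_neIdx hodd) 2
  have heven : 2 ∣ M' y y' := (Nat.not_odd_iff_even.mp hodd).two_dvd
  by_cases h2 : M' y y' = 2
  · have := cs'.simple_mul_simple_pow y y'
    rw [h2] at this
    rw [this]; exact one_mem _
  have h4 : 4 ≤ M' y y' := by omega
  by_cases hiso : ∀ c ∈ T', c ≠ y → c ≠ y' → M' c y = 2 ∧ M' c y' = 2
  · have hnb : ¬ BadPair M' T' y y' := fun h => (hy.2 _ _ h).1 rfl
    have hsp : ¬ (M' y y' % 4 = 2 → ¬ HalfSpecial M' y y' ∧ ¬ HalfSpecial M' y' y) :=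
      fun h => hnb ⟨hy.1, hy'.1, hne, hiso, heven, h4, h⟩
    rw [Classical.not_imp, not_and_or, not_not, not_not] at hsp
    rcases hsp.2 with h | h
    · exact special_mem_neIdx hne hsp.1 h
    · exact sq_mul_comm_mem (special_mem_neIdx (Ne.symm hne) (by rw [M'.symmetric]; exact hsp.1) h)
  · push Not at hiso
    obtain ⟨c, hc, h1, h3, h5⟩ := hiso
    have z1 := sph_ne_zero hT' hc hy.1
    have z2 := sph_ne_zero hT' hc hy'.1
    have o1 := M'.off_diagonal c y h1
    have o2 := M'.off_diagonal c y' h3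
    by_cases h6 : M' c y = 2
    · have := h5 h6
      exact sq_mul_comm_mem
        (sq_mem_of_joined hT' hy'.1 hy.1 hc h1 (by rw [M'.symmetric]; exact h4) (by omega))
    · exact sq_mem_of_joined hT' hy.1 hy'.1 hc h3 h4 (by omega)

/-- The image of the parabolic subgroup of the good part in `W ⧸ N_e` is an elementary abelian
`2`-group. -/
lemma sq_mem_of_mem_goodPart {T' : Set B'} (hT' : Finite (par cs' T')) {g : W}
    (hg : g ∈ par cs' (goodPart M' T')) : g ^ 2 ∈ neIdx cs' := by
  let q : W →* W ⧸ neIdx cs' := QuotientGroup.mk' _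
  have hq : ∀ w, q w = 1 ↔ w ∈ neIdx cs' := fun w => QuotientGroup.eq_one_iff w
  have hss : ∀ y, q (cs'.simple y) * q (cs'.simple y) = 1 := by
    intro y; rw [← map_mul]; simp
  have hgen : ∀ y ∈ goodPart M' T', ∀ y' ∈ goodPart M' T',
      Commute (q (cs'.simple y)) (q (cs'.simple y')) := by
    intro y hy y' hy'
    have h1 := (hq _).mpr (sq_mem_of_goodPart hT' hy hy')
    rw [map_pow, map_mul, pow_two] at h1
    have h2 := eq_inv_of_mul_eq_one_left h1
    rw [mul_inv_rev, inv_eq_of_mul_eq_one_left (hss y), inv_eq_of_mul_eq_one_left (hss y')] at h2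
    exact h2
  have hcomm : ∀ h ∈ par cs' (goodPart M' T'), ∀ y ∈ goodPart M' T',
      Commute (q h) (q (cs'.simple y)) := by
    intro h hh y hy
    induction hh using Subgroup.closure_induction with
    | mem x hx =>
      obtain ⟨z, hz, rfl⟩ := hx
      exact hgen z hz y hy
    | one => rw [map_one]; exact Commute.one_left _
    | mul x z _ _ hx hz => rw [map_mul]; exact hx.mul_left hz
    | inv x _ hx => rw [map_inv]; exact hx.inv_left
  rw [← hq, map_pow]
  induction hg using par_induction with
  | one => simp
  | step h hp t ht _ ih =>
    rw [map_mul, (hcomm h hp t ht).mul_pow, ih, pow_two, hss, one_mul]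

/-- An element of odd order of a common finite parabolic subgroup that every projection to a
dihedral factor kills lies in `N_e`. -/
lemma mem_neIdx_of_killed [Finite B'] {T : Set B} {T' : Set B'} (hfin : Finite (par cs T))
    (heq : par cs T = par cs' T') {ρ : W} (hρ : ρ ∈ par cs T) {k : ℕ} (hk : Odd k)
    (hρk : ρ ^ k = 1)
    (hker : ∀ a b p, Factor cs cs' T T' a b p → p ρ = 1) : ρ ∈ neIdx cs' := by
  have hfin' : Finite (par cs' T') := heq ▸ hfin
  have h1 : ρ ∈ par cs' (goodPart M' T') := by
    refine mem_goodPart (heq ▸ hρ) ?_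
    rintro a b ⟨ha, hb, hne, hiso, h2, h4, hns⟩
    obtain ⟨p, p1, p2, p3, p4, p5⟩ := exists_proj (cs := cs') ha hb hne (by omega) hiso
    rw [← heq] at p1 p5
    exact p5 ρ hρ (hker a b p ⟨hfin, heq, ha, hb, h2, h4, hns, p1, p2, p3, p4⟩)
  have h2 := sq_mem_of_mem_goodPart hfin' h1
  obtain ⟨r, rfl⟩ := hk
  have h3 : ρ = ((ρ ^ 2) ^ r)⁻¹ := by
    rw [← mul_eq_one_iff_eq_inv, ← pow_mul, ← pow_succ', hρk]
  rw [h3]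
  exact inv_mem (pow_mem h2 r)

lemma odd_mem_of_eq [Finite B] [Finite B'] {T : Set B} {T' : Set B'} (hfin : Finite (par cs T))
    (heq : par cs T = par cs' T') {s t : B} (hs : s ∈ T) (ht : t ∈ T) (hodd : Odd (M s t)) :
    cs.simple s * cs.simple t ∈ neIdx cs' :=
  mem_neIdx_of_killed hfin heq (mul_mem (simple_mem_par hs) (simple_mem_par ht)) hodd
    (cs.simple_mul_simple_pow s t) fun _ _ _ F => F.kill_odd hs ht hodd

lemma special_mem_of_eq [Finite B] [Finite B'] {T : Set B} {T' : Set B'}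
    (hfin : Finite (par cs T)) (heq : par cs T = par cs' T') {v v' : B} (hv : v ∈ T) (hv' : v' ∈ T)
    (hne : v ≠ v') (hm : M v v' % 4 = 2) (hs : HalfSpecial M v v') :
    (cs.simple v * cs.simple v') ^ 2 ∈ neIdx cs' := by
  have hodd : Odd (M v v' / 2) := Nat.odd_iff.mpr (by omega)
  refine mem_neIdx_of_killed hfin heq
    (pow_mem (mul_mem (simple_mem_par hv) (simple_mem_par hv')) 2) hodd ?_
    fun _ _ _ F => F.kill_special hv hv' hne hm hs
  rw [← pow_mul, Nat.mul_div_cancel' (by omega), cs.simple_mul_simple_pow]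

lemma mem_par_map {e : W ≃* W} {T : Set B} {g : W} : g ∈ par (cs.map e) T ↔ e.symm g ∈ par cs T := by
  have : par (cs.map e) T = (par cs T).map e.toMonoidHom := by
    rw [par, par, MonoidHom.map_closure]
    congr 1
    rw [Set.image_image]
    exact Set.image_congr fun i _ => by simp
  rw [this, Subgroup.mem_map_equiv]

/-- Any two generators of finite label lie in a common finite parabolic subgroup of the two
systems, after conjugating the first. -/
lemma exists_common [Finite B] [Finite B'] (cs : CoxeterSystem M W) (cs' : CoxeterSystem M' W)
    {s t : B} (h : M s t ≠ 0) :
    ∃ (x : W) (T : Set B) (T' : Set B'), s ∈ T ∧ t ∈ T ∧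
      Finite (par (cs.map (MulAut.conj x)) T) ∧ par (cs.map (MulAut.conj x)) T = par cs' T' := by
  obtain ⟨T, hsub, hT⟩ := exists_maxSph (par_pair_finite (cs := cs) h)
  obtain ⟨x, T', hT', hx⟩ := transfer (cs := cs') hT
  have heq : par (cs.map (MulAut.conj x⁻¹)) T = par cs' T' := by
    ext g
    rw [mem_par_map, hx]
    simp [mul_assoc]
  exact ⟨x⁻¹, T, T', hsub (by simp), hsub (by simp), heq ▸ hT'.1, heq⟩

lemma neIdx_le [Finite B] [Finite B'] (cs : CoxeterSystem M W) (cs' : CoxeterSystem M' W) :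
    neIdx cs ≤ neIdx cs' := by
  have hback : ∀ x g : W, MulAut.conj x g ∈ neIdx cs' → g ∈ neIdx cs' := by
    intro x g h
    have := (inferInstance : (neIdx cs').Normal).conj_mem _ h x⁻¹
    simpa [mul_assoc] using this
  refine Subgroup.normalClosure_le_normal ?_
  rintro _ (⟨s, t, hodd, rfl⟩ | ⟨v, v', hne, hm, hs, rfl⟩)
  · have h0 : M s t ≠ 0 := by rintro h; rw [h] at hodd; exact absurd hodd (by decide)
    obtain ⟨x, T, T', h1, h2, h3, h4⟩ := exists_common cs cs' h0
    apply hback x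
    simpa only [map_mul, CoxeterSystem.map_simple] using odd_mem_of_eq h3 h4 h1 h2 hodd
  · have h0 : M v v' ≠ 0 := by intro h; rw [h] at hm; omega
    obtain ⟨x, T, T', h1, h2, h3, h4⟩ := exists_common cs cs' h0
    apply hback x
    simpa only [map_mul, map_pow, CoxeterSystem.map_simple] using
      special_mem_of_eq h3 h4 h1 h2 hne hm hs

lemma neIdx_eq [Finite B] [Finite B'] (cs : CoxeterSystem M W) (cs' : CoxeterSystem M' W) :
    neIdx cs = neIdx cs' :=
  le_antisymm (neIdx_le cs cs') (neIdx_le cs' cs)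

lemma map_neIdx (cs : CoxeterSystem M W) (φ : W ≃* W) :
    (neIdx cs).map φ.toMonoidHom = neIdx (cs.map φ) := by
  rw [neIdx, Subgroup.map_normalClosure _ _ φ.surjective, neIdx]
  congr 1
  ext x
  constructor
  · rintro ⟨_, ⟨s, t, h, rfl⟩ | ⟨v, v', h1, h2, h3, rfl⟩, rfl⟩
    · exact Or.inl ⟨s, t, h, by simp⟩
    · exact Or.inr ⟨v, v', h1, h2, h3, by simp⟩
  · rintro (⟨s, t, h, rfl⟩ | ⟨v, v', h1, h2, h3, rfl⟩)
    · exact ⟨_, Or.inl ⟨s, t, h, rfl⟩, by simp⟩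
    · exact ⟨_, Or.inr ⟨v, v', h1, h2, h3, rfl⟩, by simp⟩

end Main

lemma neSubgroup_eq {m : W → W → ℕ} {S : Set W} {cm : CoxeterMatrix S}
    (cs : CoxeterSystem cm W) (h1 : ∀ s : S, cs.simple s = (s : W))
    (h2 : ∀ s t : S, cm.M s t = m s t) : NeSubgroup m S = neIdx cs := by
  apply le_antisymm
  · refine Subgroup.normalClosure_le_normal ?_
    rintro _ (⟨s, hs, t, ht, hodd, rfl⟩ | ⟨a, b, ⟨ha, hb, hne, hm, hsp⟩, rfl⟩)
    · have := odd_mem_neIdx (cs := cs) (s := ⟨s, hs⟩) (t := ⟨t, ht⟩) (by rwa [h2])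
      simpa only [h1, SetLike.mem_coe] using this
    · have hne' : (⟨a, ha⟩ : S) ≠ ⟨b, hb⟩ := fun e => hne (congrArg Subtype.val e)
      have hm' : cm.M ⟨a, ha⟩ ⟨b, hb⟩ % 4 = 2 := by rwa [h2]
      rcases hsp with hsp | hsp
      · have hh : HalfSpecial cm ⟨a, ha⟩ ⟨b, hb⟩ := by
          rintro ⟨s, hs⟩ hsa hsb h0
          rw [h2] at h0
          rw [h2, h2]
          exact hsp s hs (fun e => hsa (Subtype.ext e)) (fun e => hsb (Subtype.ext e)) h0
        have := special_mem_neIdx (cs := cs) hne' hm' hh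
        simpa only [h1, SetLike.mem_coe] using this
      · have hh : HalfSpecial cm ⟨b, hb⟩ ⟨a, ha⟩ := by
          rintro ⟨s, hs⟩ hsb hsa h0
          rw [h2] at h0
          rw [h2, h2]
          exact (hsp s hs (fun e => hsa (Subtype.ext e)) (fun e => hsb (Subtype.ext e)) h0).symm
        have := sq_mul_comm_mem
          (special_mem_neIdx (cs := cs) hne'.symm (by rw [cm.symmetric]; exact hm') hh)
        simpa only [h1, SetLike.mem_coe] using this
  · refine Subgroup.normalClosure_le_normal ?_
    rintro _ (⟨s, t, hodd, rfl⟩ | ⟨v, v', hne, hm, hsp, rfl⟩)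
    · rw [h1, h1]
      exact Subgroup.subset_normalClosure
        (Or.inl ⟨s, s.2, t, t.2, by rwa [← h2], rfl⟩)
    · rw [h1, h1]
      refine Subgroup.subset_normalClosure (Or.inr ⟨v, v', ⟨v.2, v'.2,
        fun e => hne (Subtype.ext e), by rwa [← h2], Or.inl fun s hs hsv hsv' h0 => ?_⟩, rfl⟩)
      have h := hsp ⟨s, hs⟩ (fun e => hsv (congrArg Subtype.val e))
        (fun e => hsv' (congrArg Subtype.val e)) (by rwa [h2])
      rwa [h2, h2] at h

end CoxGeo

/-- `N_e` does not depend on the choice of Coxeter generators, and is a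
characteristic subgroup of `W`. -/
theorem Ne_characteristic (m m' : W → W → ℕ) (S S' : Set W)
    (hcs : IsCoxeterSystemOn m S) (hfin : S.Finite)
    (hcs' : IsCoxeterSystemOn m' S') (hfin' : S'.Finite) :
    NeSubgroup m S = NeSubgroup m' S' ∧
      ∀ φ : W ≃* W, Subgroup.map φ.toMonoidHom (NeSubgroup m S) = NeSubgroup m S := by
  obtain ⟨cm, cs, h1, h2⟩ := hcs
  obtain ⟨cm', cs', h1', h2'⟩ := hcs'
  have : Finite S := hfin.to_subtype
  have : Finite S' := hfin'.to_subtype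
  rw [CoxGeo.neSubgroup_eq cs h1 h2, CoxGeo.neSubgroup_eq cs' h1' h2']
  refine ⟨CoxGeo.neIdx_eq cs cs', fun φ => ?_⟩
  rw [CoxGeo.map_neIdx]
  exact CoxGeo.neIdx_eq _ _
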